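/- arXiv:2503.02136 — 6 statements merged into one kernel-verified Lean document; each statement's English description precedes it below -/
import Mathlib

section
/- For every even integer r ≥ 2, there exists a weak Gallai-Schur r-coloring of [1, 9·5^((r−2)/2) − 1], and for every m ≥ 9·5^((r−2)/2) there is no weak Gallai-Schur r-coloring of [1, m]. Equivalently, the weak Gallai-Schur number WGS(r) equals 9·5^((r−2)/2) for even r ≥ 2. -/
/-- A weak Gallai–Schur coloring of the interval `[1, m]` with color set `C`:
`χ` maps `[1, m]` into `C`, is surjective onto `C`, admits no monochromatic
solution of `a + b = c` with `a`, `b`, `c` pairwise distinct, and admits no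
rainbow solution of `a + b = c`. -/
def WeakGS (m : ℕ) (C : Finset ℕ) (χ : ℕ → ℕ) : Prop :=
  (∀ x ∈ Finset.Icc 1 m, χ x ∈ C) ∧
  (∀ i ∈ C, ∃ x ∈ Finset.Icc 1 m, χ x = i) ∧
  (∀ a ∈ Finset.Icc 1 m, ∀ b ∈ Finset.Icc 1 m, ∀ c ∈ Finset.Icc 1 m,
      a + b = c → a ≠ b → a ≠ c → b ≠ c → ¬(χ a = χ b ∧ χ b = χ c)) ∧
  (∀ a ∈ Finset.Icc 1 m, ∀ b ∈ Finset.Icc 1 m, ∀ c ∈ Finset.Icc 1 m,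
      a + b = c → ¬(χ a ≠ χ b ∧ χ a ≠ χ c ∧ χ b ≠ χ c))

/-- The weak Gallai–Schur number `WGS r`: the least `n` such that no weak
Gallai–Schur `r`-coloring of `[1, m]` exists for any `m ≥ n`. -/
noncomputable def WGS (r : ℕ) : ℕ :=
  sInf {n : ℕ | ∀ m, n ≤ m → ∀ χ : ℕ → ℕ, ¬ WeakGS m (Finset.Icc 1 r) χ}

/-!
Upper bound. When at least three colors occur, let `c` be the first integer whose color differs
from those of `1` and `2`. Since no solution is rainbow, the coloring of `[1, c - 1]` is invariant
under `x ↦ c - x`, which forces `c ≤ 6`. If `c` is `4` or `6`, the color of `1` is exactly the set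
of odd numbers; if `c = 5`, the colors of `1` and `2` are exactly the residues `±1` and `±2`
modulo `5`. Restricting to the multiples of `2` or of `5` therefore removes one or two colors, and
two colors suffice only up to `8`, the two-color weak Schur number.

Lower bound. Coloring the residues `±1` and `±2` modulo `5` by two new colors and the multiples of
`5` by a smaller coloring turns a coloring of `[1, N - 1]` into one of `[1, 5 N - 1]`.
-/

namespace WeakGS

variable {m : ℕ} {C : Finset ℕ} {χ : ℕ → ℕ} {a b c x : ℕ}

theorem color_mem (h : WeakGS m C χ) (hx : 1 ≤ x) (hxm : x ≤ m) : χ x ∈ C :=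
  h.1 x (Finset.mem_Icc.2 ⟨hx, hxm⟩)

theorem color_ne_of_add_eq (h : WeakGS m C χ) (ha : 1 ≤ a) (hab : a < b) (hc : a + b = c)
    (hcm : c ≤ m) (heq : χ a = χ b) : χ c ≠ χ a := fun hca =>
  h.2.2.1 a (Finset.mem_Icc.2 (by omega)) b (Finset.mem_Icc.2 (by omega))
    c (Finset.mem_Icc.2 (by omega)) hc (by omega) (by omega) (by omega)
    ⟨heq, heq.symm.trans hca.symm⟩

theorem color_eq_or_eq_of_add_eq (h : WeakGS m C χ) (ha : 1 ≤ a) (hb : 1 ≤ b) (hc : a + b = c)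
    (hcm : c ≤ m) (hne : χ a ≠ χ b) : χ c = χ a ∨ χ c = χ b := by
  have := h.2.2.2 a (Finset.mem_Icc.2 (by omega)) b (Finset.mem_Icc.2 (by omega))
    c (Finset.mem_Icc.2 (by omega)) hc
  tauto

theorem card_le (h : WeakGS m C χ) : C.card ≤ m := by
  have hC : C ⊆ (Finset.Icc 1 m).image χ := fun i hi => Finset.mem_image.2 (h.2.1 i hi)
  simpa using (Finset.card_le_card hC).trans Finset.card_image_le

theorem restrict (h : WeakGS m C χ) {d : ℕ} {D : Finset ℕ} (hDC : D ⊆ C)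
    (hD : ∀ x, 1 ≤ x → x ≤ m → (χ x ∈ D ↔ d ∣ x)) : WeakGS (m / d) D (fun x => χ (d * x)) := by
  have hd : ∀ x ∈ Finset.Icc 1 (m / d), 0 < d := fun x hx =>
    Nat.pos_of_ne_zero fun hd => by simp [hd] at hx
  have hmul : ∀ x ∈ Finset.Icc 1 (m / d), d * x ∈ Finset.Icc 1 m := fun x hx => by
    have hx' := Finset.mem_Icc.1 hx
    exact Finset.mem_Icc.2 ⟨Nat.mul_pos (hd x hx) hx'.1,
      (Nat.mul_le_mul_left d hx'.2).trans (Nat.mul_div_le m d)⟩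
  refine ⟨fun x hx => ?_, fun i hi => ?_, fun a ha b hb c hc habc hab hac hbc => ?_,
    fun a ha b hb c hc habc => ?_⟩
  · have hdx := Finset.mem_Icc.1 (hmul x hx)
    exact (hD _ hdx.1 hdx.2).2 (dvd_mul_right d x)
  · obtain ⟨x, hx, rfl⟩ := h.2.1 i (hDC hi)
    rw [Finset.mem_Icc] at hx
    obtain ⟨y, rfl⟩ := (hD x hx.1 hx.2).1 hi
    refine ⟨y, Finset.mem_Icc.2 ⟨?_, ?_⟩, rfl⟩
    · exact Nat.pos_of_ne_zero fun hy => by simp [hy] at hx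
    · exact (Nat.le_div_iff_mul_le (Nat.pos_of_ne_zero fun hd => by simp [hd] at hx)).2
        (by rw [mul_comm]; exact hx.2)
  · have hinj := mul_right_injective₀ (hd a ha).ne'
    exact h.2.2.1 _ (hmul a ha) _ (hmul b hb) _ (hmul c hc) (by rw [← habc, mul_add])
      (hinj.ne hab) (hinj.ne hac) (hinj.ne hbc)
  · exact h.2.2.2 _ (hmul a ha) _ (hmul b hb) _ (hmul c hc) (by rw [← habc, mul_add])

end WeakGS

theorem exists_mono_add_of_two_coloring (f : ℕ → Prop) :
    ∃ a b, 1 ≤ a ∧ a < b ∧ a + b ≤ 9 ∧ (f a ↔ f b) ∧ (f (a + b) ↔ f a) := by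
  by_contra! hf
  have opp (a b : ℕ) (heq : f a ↔ f b) (hab : 1 ≤ a ∧ a < b ∧ a + b ≤ 9 := by decide) :
      ¬(f (a + b) ↔ f a) := by
    have := hf a b hab.1 hab.2.1 hab.2.2 heq
    tauto
  by_cases h12 : f 1 ↔ f 2
  · have h3 : ¬(f 3 ↔ f 1) := opp 1 2 h12
    by_cases h14 : f 1 ↔ f 4
    · have h5 : ¬(f 5 ↔ f 1) := opp 1 4 h14
      have h6 : ¬(f 6 ↔ f 1) := by grind [opp 2 4]
      have h8 : f 8 ↔ f 1 := by grind [opp 3 5]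
      have h9 : f 9 ↔ f 1 := by grind [opp 3 6]
      exact opp 1 8 h8.symm (by decide) h9
    · have h7 : f 7 ↔ f 1 := by grind [opp 3 4]
      have h5 : ¬(f 5 ↔ f 1) := by grind [opp 2 5]
      have h8 : ¬(f 8 ↔ f 1) := opp 1 7 h7.symm
      exact h8 (by grind [opp 3 5])
  · by_cases h13 : f 1 ↔ f 3
    · have h4 : ¬(f 4 ↔ f 1) := opp 1 3 h13
      have h6 : f 6 ↔ f 1 := by grind [opp 2 4]
      have h5 : ¬(f 5 ↔ f 1) := by grind [opp 1 5]
      have h7 : ¬(f 7 ↔ f 1) := opp 1 6 h6.symm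
      exact h7 (by grind [opp 2 5])
    · have h5 : f 5 ↔ f 1 := by grind [opp 2 3]
      have h4 : ¬(f 4 ↔ f 1) := by grind [opp 1 4]
      have h6 : ¬(f 6 ↔ f 1) := opp 1 5 h5.symm
      exact h6 (by grind [opp 2 4])

namespace WeakGS

variable {m : ℕ} {C : Finset ℕ} {χ : ℕ → ℕ} {a b c x : ℕ}

theorem lt_three_of_card_eq_one (h : WeakGS m C χ) (hC : C.card = 1) : m < 3 := by
  by_contra! hm
  have heq {x y : ℕ} (hx : x ∈ C) (hy : y ∈ C) : x = y := Finset.card_le_one.1 hC.le x hx y hy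
  have h1 : χ 1 ∈ C := h.color_mem le_rfl (by omega)
  have h2 : χ 2 ∈ C := h.color_mem (by omega) (by omega)
  have h3 : χ 3 ∈ C := h.color_mem (by omega) hm
  exact h.color_ne_of_add_eq le_rfl one_lt_two rfl hm (heq h1 h2) (heq h3 h1)

theorem lt_nine_of_card_eq_two (h : WeakGS m C χ) (hC : C.card = 2) : m < 9 := by
  by_contra! hm
  obtain ⟨p, q, -, rfl⟩ := Finset.card_eq_two.1 hC
  have heq : ∀ x y, 1 ≤ x → x ≤ 9 → 1 ≤ y → y ≤ 9 →
      (χ x = p ↔ χ y = p) → χ x = χ y := by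
    intro x y hx hx9 hy hy9 hxy
    have hmx := h.color_mem hx (hx9.trans hm)
    have hmy := h.color_mem hy (hy9.trans hm)
    grind
  obtain ⟨a, b, ha, hab, hab9, hfab, hfc⟩ := exists_mono_add_of_two_coloring fun x => χ x = p
  exact h.color_ne_of_add_eq ha hab rfl (hab9.trans hm)
    (heq a b ha (by omega) (by omega) (by omega) hfab)
    (heq (a + b) a (by omega) hab9 ha (by omega) hfc)

theorem color_sub_eq_of_new (h : WeakGS m C χ) (hcm : c ≤ m)
    (hnew : ∀ x, 1 ≤ x → x < c → χ x ≠ χ c) (hx : 1 ≤ x) (hxc : x < c) : χ (c - x) = χ x := by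
  by_contra hne
  rcases h.color_eq_or_eq_of_add_eq hx (by omega) (by omega : x + (c - x) = c) hcm
    (Ne.symm hne) with hc | hc
  · exact hnew x hx hxc hc.symm
  · exact hnew (c - x) (by omega) (by omega) hc.symm

theorem color_two_ne_color_one_of_new (h : WeakGS m C χ) (hc : 4 ≤ c) (hcm : c ≤ m)
    (hnew : ∀ x, 1 ≤ x → x < c → χ x ≠ χ c) : χ 2 ≠ χ 1 := by
  intro h21
  have hc1 : χ (c - 1) = χ 1 := h.color_sub_eq_of_new hcm hnew le_rfl (by omega)
  have hc2 : χ (c - 2) = χ 2 := h.color_sub_eq_of_new hcm hnew (by omega) (by omega)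
  rcases hc.eq_or_lt with rfl | hc
  · exact h.color_ne_of_add_eq le_rfl one_lt_two rfl (by omega) h21.symm hc1
  · exact h.color_ne_of_add_eq le_rfl (by omega : 1 < c - 2) (by omega) (by omega)
      (hc2.trans h21).symm hc1

end WeakGS

/-- The coloring `χ` uses exactly two colors on `[1, c - 1]`, namely those of `1` and `2`, and its
third color appears at `c`. In a weak Gallai–Schur coloring with at least three colors, `1` and `2`
always carry the first two, see `WeakGS.exists_isThirdColorAt`. -/
structure IsThirdColorAt (χ : ℕ → ℕ) (c : ℕ) : Prop where
  two_lt : 2 < c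
  two_ne_one : χ 2 ≠ χ 1
  ne_one : χ c ≠ χ 1
  ne_two : χ c ≠ χ 2
  eq_or_eq : ∀ x, 1 ≤ x → x < c → χ x = χ 1 ∨ χ x = χ 2

theorem WeakGS.exists_isThirdColorAt {m : ℕ} {C : Finset ℕ} {χ : ℕ → ℕ} (h : WeakGS m C χ)
    (hC : 3 ≤ C.card) : ∃ c ≤ m, IsThirdColorAt χ c := by
  have hm : 3 ≤ m := hC.trans h.card_le
  have h3 (hne : χ 1 ≠ χ 2) : χ 3 = χ 1 ∨ χ 3 = χ 2 :=
    h.color_eq_or_eq_of_add_eq le_rfl one_le_two rfl hm hne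
  have hcard : ({χ 1, χ 2, χ 3} : Finset ℕ).card < C.card := by
    refine lt_of_lt_of_le (Nat.lt_succ_of_le ?_) hC
    by_cases h12 : χ 1 = χ 2
    · simpa [h12] using Finset.card_le_two
    · rcases h3 h12 with h3 | h3 <;> simpa [h3, Finset.insert_comm] using Finset.card_le_two
  have hex : ∃ c, 1 ≤ c ∧ c ≤ m ∧ χ c ∉ ({χ 1, χ 2, χ 3} : Finset ℕ) := by
    obtain ⟨i, hiC, hi⟩ := Finset.exists_mem_notMem_of_card_lt_card hcard
    obtain ⟨c, hc, rfl⟩ := h.2.1 i hiC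
    rw [Finset.mem_Icc] at hc
    exact ⟨c, hc.1, hc.2, hi⟩
  obtain ⟨c, ⟨hc1, hcm, hc⟩, hmin⟩ := exists_minimal_of_wellFoundedLT _ hex
  have hearlier : ∀ x, 1 ≤ x → x < c → χ x ∈ ({χ 1, χ 2, χ 3} : Finset ℕ) := fun x hx hxc =>
    not_not.1 fun hxn => hxc.not_ge (hmin ⟨hx, by omega, hxn⟩ hxc.le)
  simp only [Finset.mem_insert, Finset.mem_singleton, not_or] at hc hearlier
  have hc4 : 4 ≤ c := by
    by_contra! hlt
    interval_cases c <;> simp at hc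
  have h21 : χ 2 ≠ χ 1 := h.color_two_ne_color_one_of_new hc4 hcm fun x hx hxc => by
    have := hearlier x hx hxc
    grind
  exact ⟨c, hcm, by omega, h21, hc.1, hc.2.1, fun x hx hxc => by grind⟩

namespace IsThirdColorAt

variable {m : ℕ} {C : Finset ℕ} {χ : ℕ → ℕ} {c x : ℕ}

theorem color_sub_eq (hc : IsThirdColorAt χ c) (h : WeakGS m C χ) (hcm : c ≤ m) (hx : 1 ≤ x)
    (hxc : x < c) : χ (c - x) = χ x :=
  h.color_sub_eq_of_new hcm
    (fun y hy hyc heq => (hc.eq_or_eq y hy hyc).elim (fun hy1 => hc.ne_one (heq.symm.trans hy1))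
      fun hy2 => hc.ne_two (heq.symm.trans hy2)) hx hxc

theorem four_le (hc : IsThirdColorAt χ c) (h : WeakGS m C χ) (hcm : c ≤ m) : 4 ≤ c := by
  have hc2 := hc.two_lt
  by_contra! hlt
  obtain rfl : c = 3 := by omega
  exact hc.two_ne_one (hc.color_sub_eq h hcm le_rfl (by omega))

theorem le_six (hc : IsThirdColorAt χ c) (h : WeakGS m C χ) (hcm : c ≤ m) : c ≤ 6 := by
  by_contra! hlt
  have h4 : χ 4 = χ 2 := by
    refine (hc.eq_or_eq 4 (by omega) (by omega)).resolve_left fun h41 => ?_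
    have h3 : χ 3 = χ 2 := (hc.eq_or_eq 3 (by omega) (by omega)).resolve_left fun h31 =>
      h.color_ne_of_add_eq le_rfl (by omega) rfl (by omega) h31.symm h41
    rcases hc.eq_or_eq 5 (by omega) (by omega) with h5 | h5
    · exact h.color_ne_of_add_eq le_rfl (by omega) (rfl : 1 + 4 = 5) (by omega) h41.symm h5
    · exact h.color_ne_of_add_eq one_le_two (by omega) (rfl : 2 + 3 = 5) (by omega) h3.symm h5
  have hc2 : χ (c - 2) = χ 2 := hc.color_sub_eq h hcm (by omega) (by omega)
  have hc4 : χ (c - 4) = χ 2 := (hc.color_sub_eq h hcm (by omega) (by omega)).trans h4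
  exact h.color_ne_of_add_eq one_le_two (by omega : 2 < c - 4) (by omega) (by omega) hc4.symm hc2

theorem color_three_of_six (hc : IsThirdColorAt χ 6) (h : WeakGS m C χ) (hm : 10 ≤ m) :
    χ 3 = χ 1 := by
  refine (hc.eq_or_eq 3 (by omega) (by omega)).resolve_right fun h3 => ?_
  have h21 := hc.two_ne_one
  have h61 := hc.ne_one
  have h62 := hc.ne_two
  have h5 : χ 5 = χ 1 := hc.color_sub_eq h (by omega) le_rfl (by decide)
  have h4 : χ 4 = χ 2 := hc.color_sub_eq h (by omega) one_le_two (by decide)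
  have sum_color (a b : ℕ) (hab : 1 ≤ a ∧ 1 ≤ b ∧ a + b ≤ 10 := by decide) :
      χ a ≠ χ b → χ (a + b) = χ a ∨ χ (a + b) = χ b :=
    h.color_eq_or_eq_of_add_eq hab.1 hab.2.1 rfl (hab.2.2.trans hm)
  have h7 : χ 7 = χ 1 := by grind [sum_color 1 6, sum_color 2 5]
  have h8 : χ 8 = χ 2 := by grind [sum_color 2 6, sum_color 3 5]
  have h9 : χ 9 = χ 2 := by grind [sum_color 3 6, sum_color 2 7]
  have h10 : χ 10 = χ 2 := by grind [sum_color 4 6, sum_color 1 9]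
  exact h.color_ne_of_add_eq one_le_two (by omega) (rfl : 2 + 8 = 10) hm h8.symm h10

theorem initial_pattern (hc : IsThirdColorAt χ c) (h : WeakGS m C χ) (hcm : c ≤ m) (hm : 10 ≤ m) :
    (Even c ∧ ∀ x, 1 ≤ x → x < c → (χ x = χ 1 ↔ Odd x)) ∨ (c = 5 ∧ χ 3 = χ 2 ∧ χ 4 = χ 1) := by
  have hc4 := hc.four_le h hcm
  have hc6 := hc.le_six h hcm
  have hc1 : χ (c - 1) = χ 1 := hc.color_sub_eq h hcm le_rfl (by omega)
  have hc2 : χ (c - 2) = χ 2 := hc.color_sub_eq h hcm (by omega) (by omega)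
  have h21 := hc.two_ne_one
  interval_cases c
  · refine Or.inl ⟨by decide, fun x hx hx4 => ?_⟩
    interval_cases x <;> simp_all [Nat.odd_iff]
  · exact Or.inr ⟨rfl, hc2, hc1⟩
  · have h3 := hc.color_three_of_six h hm
    refine Or.inl ⟨by decide, fun x hx hx6 => ?_⟩
    interval_cases x <;> simp_all [Nat.odd_iff]

end IsThirdColorAt

namespace WeakGS

variable {m : ℕ} {C : Finset ℕ} {χ : ℕ → ℕ} {a b c x : ℕ}

theorem color_eq_of_add_eq_add (h : WeakGS m C χ) (ha : 1 ≤ a) (hb : 1 ≤ b) (hc : 1 ≤ c)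
    (hx : 1 ≤ x) (hsum : a + b = c + x) (hm : c + x ≤ m) (hab : χ a ≠ χ b) (hca : χ c ≠ χ a)
    (hcb : χ c ≠ χ b) (hcx : χ c ≠ χ x) : χ (c + x) = χ x := by
  have hsub := h.color_eq_or_eq_of_add_eq ha hb hsum hm hab
  refine (h.color_eq_or_eq_of_add_eq hc hx rfl hm hcx).resolve_left fun heq => ?_
  rw [heq] at hsub
  exact hsub.elim hca hcb

theorem color_eq_one_iff_odd (h : WeakGS m C χ) (hc : IsThirdColorAt χ c) (hcm : c ≤ m)
    (heven : Even c) (hinit : ∀ x, 1 ≤ x → x < c → (χ x = χ 1 ↔ Odd x)) :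
    ∀ x, 1 ≤ x → x ≤ m → (χ x = χ 1 ↔ Odd x) := by
  have hc2 := hc.two_lt
  intro x
  induction x using Nat.strong_induction_on with
  | _ x ih =>
  intro hx hxm
  rcases lt_trichotomy x c with hxc | rfl | hcx
  · exact hinit x hx hxc
  · exact iff_of_false hc.ne_one (Nat.not_odd_iff_even.2 heven)
  rcases Nat.even_or_odd x with hxe | hxo
  · refine iff_of_false (fun hx1 => ?_) (Nat.not_odd_iff_even.2 hxe)
    have hpred : χ (x - 1) = χ 1 :=
      (ih (x - 1) (by omega) (by omega) (by omega)).2 (Nat.Even.sub_odd hx hxe odd_one)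
    exact h.color_ne_of_add_eq le_rfl (by omega) (by omega) hxm hpred.symm hx1
  · refine iff_of_true ?_ hxo
    have hsub (d : ℕ) (hd : Even d) (hd0 : 0 < d) (hdx : d < x) : χ (x - d) = χ 1 :=
      (ih (x - d) (by omega) (by omega) (by omega)).2 (Nat.Odd.sub_even hdx.le hxo hd)
    have hsub2 : χ (x - 2) = χ 1 := hsub 2 even_two two_pos (by omega)
    have hsubc : χ (x - c) = χ 1 := hsub c heven (by omega) hcx
    have hper : χ (c + (x - c)) = χ (x - c) :=
      h.color_eq_of_add_eq_add (a := 2) (b := x - 2) one_le_two (by omega) (by omega) (by omega)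
        (by omega) (by omega) (hsub2 ▸ hc.two_ne_one) hc.ne_two (hsub2 ▸ hc.ne_one)
        (hsubc ▸ hc.ne_one)
    rwa [Nat.add_sub_cancel' hcx.le, hsubc] at hper

theorem color_eq_color_sub_five (h : WeakGS m C χ) (hc : IsThirdColorAt χ 5) (h3 : χ 3 = χ 2)
    (hx : 5 < x) (hxm : x ≤ m) (h0 : x % 5 ≠ 0)
    (hprev : ∀ y, 1 ≤ y → y < x →
      (χ y = χ 1 ↔ y % 5 = 1 ∨ y % 5 = 4) ∧ (χ y = χ 2 ↔ y % 5 = 2 ∨ y % 5 = 3)) :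
    χ x = χ (x - 5) := by
  have h12 := hc.two_ne_one.symm
  have h51 := hc.ne_one
  have h52 := hc.ne_two
  have h5x : χ 5 ≠ χ (x - 5) := by
    have := hprev (x - 5) (by omega) (by omega)
    grind
  have hperiod (a : ℕ) (ha : 1 ≤ a) (hax : a < x) (hne : χ a ≠ χ (x - a)) (h5a : χ 5 ≠ χ a)
      (h5xa : χ 5 ≠ χ (x - a)) : χ x = χ (x - 5) := by
    have := h.color_eq_of_add_eq_add ha (by omega) (by omega) (by omega)
      (by omega : a + (x - a) = 5 + (x - 5)) (by omega) hne h5a h5xa h5x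
    rwa [Nat.add_sub_cancel' (by omega)] at this
  obtain hr | hr | hr | hr : x % 5 = 1 ∨ x % 5 = 2 ∨ x % 5 = 3 ∨ x % 5 = 4 := by omega
  · have hsub : χ (x - 2) = χ 1 := (hprev (x - 2) (by omega) (by omega)).1.2 (by omega)
    exact hperiod 2 (by omega) (by omega) (by rwa [hsub, ne_comm]) h52 (by rwa [hsub])
  · have hsub : χ (x - 3) = χ 1 := (hprev (x - 3) (by omega) (by omega)).1.2 (by omega)
    exact hperiod 3 (by omega) (by omega) (by rwa [hsub, h3, ne_comm]) (by rwa [h3]) (by rwa [hsub])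
  · have hsub : χ (x - 1) = χ 2 := (hprev (x - 1) (by omega) (by omega)).2.2 (by omega)
    exact hperiod 1 (by omega) (by omega) (by rwa [hsub]) h51 (by rwa [hsub])
  · have hsub : χ (x - 1) = χ 2 := (hprev (x - 1) (by omega) (by omega)).2.2 (by omega)
    exact hperiod 1 (by omega) (by omega) (by rwa [hsub]) h51 (by rwa [hsub])

theorem color_mod_five (h : WeakGS m C χ) (hc : IsThirdColorAt χ 5) (h3 : χ 3 = χ 2)
    (h4 : χ 4 = χ 1) {x : ℕ} (hx : 1 ≤ x) (hxm : x ≤ m) :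
    (χ x = χ 1 ↔ x % 5 = 1 ∨ x % 5 = 4) ∧ (χ x = χ 2 ↔ x % 5 = 2 ∨ x % 5 = 3) := by
  have h12 := hc.two_ne_one.symm
  have h51 := hc.ne_one
  have h52 := hc.ne_two
  induction x using Nat.strong_induction_on with
  | _ x ih =>
  by_cases hx5 : x ≤ 5
  · interval_cases x <;> simp_all [eq_comm]
  have hprev (y : ℕ) (hy : 1 ≤ y) (hyx : y < x) := ih y hyx hy (by omega)
  by_cases h0 : x % 5 = 0
  · have hsub1 : χ (x - 1) = χ 1 := (hprev (x - 1) (by omega) (by omega)).1.2 (by omega)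
    have hsub2 : χ (x - 2) = χ 2 := (hprev (x - 2) (by omega) (by omega)).2.2 (by omega)
    have hne1 : χ x ≠ χ 1 :=
      h.color_ne_of_add_eq le_rfl (by omega : 1 < x - 1) (by omega) hxm hsub1.symm
    have hne2 : χ x ≠ χ 2 :=
      h.color_ne_of_add_eq one_le_two (by omega : 2 < x - 2) (by omega) hxm hsub2.symm
    exact ⟨iff_of_false hne1 (by omega), iff_of_false hne2 (by omega)⟩
  have hmod : (x - 5) % 5 = x % 5 := by omega
  rw [h.color_eq_color_sub_five hc h3 (by omega) hxm h0 hprev, ← hmod]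
  exact hprev (x - 5) (by omega) (by omega)

theorem restrict_two (h : WeakGS m C χ)
    (hodd : ∀ x, 1 ≤ x → x ≤ m → (χ x = χ 1 ↔ Odd x)) :
    WeakGS (m / 2) (C.erase (χ 1)) (fun x => χ (2 * x)) := by
  refine h.restrict (Finset.erase_subset _ _) fun x hx hxm => ?_
  rw [Finset.mem_erase, Ne, hodd x hx hxm, Nat.not_odd_iff_even, even_iff_two_dvd]
  exact and_iff_left (h.color_mem hx hxm)

theorem restrict_five (h : WeakGS m C χ) (hfive : ∀ x, 1 ≤ x → x ≤ m →
      (χ x = χ 1 ↔ x % 5 = 1 ∨ x % 5 = 4) ∧ (χ x = χ 2 ↔ x % 5 = 2 ∨ x % 5 = 3)) :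
    WeakGS (m / 5) (C \ {χ 1, χ 2}) (fun x => χ (5 * x)) := by
  refine h.restrict Finset.sdiff_subset fun x hx hxm => ?_
  have hmem := h.color_mem hx hxm
  simp only [Finset.mem_sdiff, Finset.mem_insert, Finset.mem_singleton, hmem, true_and,
    hfive x hx hxm]
  omega

theorem exists_restrict (h : WeakGS m C χ) (hC : 3 ≤ C.card) (hm : 10 ≤ m) :
    (∃ D χ', D.card + 1 = C.card ∧ WeakGS (m / 2) D χ') ∨
      (∃ D χ', D.card + 2 = C.card ∧ WeakGS (m / 5) D χ') := by
  obtain ⟨c, hcm, hc⟩ := h.exists_isThirdColorAt hC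
  have h1 : χ 1 ∈ C := h.color_mem le_rfl (by omega)
  have h2 : χ 2 ∈ C := h.color_mem one_le_two (by omega)
  rcases hc.initial_pattern h hcm hm with ⟨heven, hinit⟩ | ⟨rfl, h3, h4⟩
  · exact Or.inl ⟨_, _, Finset.card_erase_add_one h1,
      h.restrict_two (h.color_eq_one_iff_odd hc hcm heven hinit)⟩
  · have hsub : {χ 1, χ 2} ⊆ C := Finset.insert_subset h1 (Finset.singleton_subset_iff.2 h2)
    refine Or.inr ⟨_, _, ?_, h.restrict_five fun x hx hxm => h.color_mod_five hc h3 h4 hx hxm⟩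
    simpa [Finset.card_pair hc.two_ne_one.symm] using Finset.card_sdiff_add_card_eq_card hsub

theorem lt_of_card_eq (k : ℕ) : ∀ {m : ℕ} {C : Finset ℕ} {χ : ℕ → ℕ}, WeakGS m C χ →
    (C.card = 2 * k + 2 → m < 9 * 5 ^ k) ∧ (C.card = 2 * k + 3 → m < 18 * 5 ^ k) := by
  induction k with
  | zero =>
    intro m C χ h
    refine ⟨fun hC => by simpa using h.lt_nine_of_card_eq_two hC, fun hC => ?_⟩
    by_contra! hm
    rcases h.exists_restrict hC.ge (by omega) with ⟨D, χ', hD, h'⟩ | ⟨D, χ', hD, h'⟩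
    · have := h'.lt_nine_of_card_eq_two (by omega)
      omega
    · have := h'.lt_three_of_card_eq_one (by omega)
      omega
  | succ k ih =>
    intro m C χ h
    have hpos : 0 < 5 ^ k := by positivity
    have heven {m : ℕ} {C : Finset ℕ} {χ : ℕ → ℕ} (h : WeakGS m C χ)
        (hC : C.card = 2 * (k + 1) + 2) : m < 9 * 5 ^ (k + 1) := by
      rw [pow_succ]
      by_contra! hm
      rcases h.exists_restrict (by omega) (by omega) with ⟨D, χ', hD, h'⟩ | ⟨D, χ', hD, h'⟩
      · have := (ih h').2 (by omega)
        omega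
      · have := (ih h').1 (by omega)
        omega
    refine ⟨heven h, fun hC => ?_⟩
    by_contra! hm
    rw [pow_succ] at hm
    rcases h.exists_restrict (by omega) (by omega) with ⟨D, χ', hD, h'⟩ | ⟨D, χ', hD, h'⟩
    · have := heven h' (by omega)
      rw [pow_succ] at this
      omega
    · have := (ih h').2 (by omega)
      omega

end WeakGS

/-- The coloring of `ℕ` that copies the coloring `χ` onto the multiples of `d` and colors every
other integer by its residue modulo `d`, through `ρ`. -/
def residueBlowUp (d : ℕ) (ρ : ZMod d → ℕ) (χ : ℕ → ℕ) (x : ℕ) : ℕ :=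
  if d ∣ x then χ (x / d) else ρ x

/-- A coloring of the nonzero residues modulo `d` that may be blown up by `residueBlowUp`: opposite
residues share their color and no two residues with nonzero sum form a monochromatic or a rainbow
solution of `i + j = k`. -/
structure IsResidueColoring {d : ℕ} (ρ : ZMod d → ℕ) : Prop where
  neg : ∀ i ≠ 0, ρ (-i) = ρ i
  not_mono : ∀ i ≠ 0, ∀ j ≠ 0, i + j ≠ 0 → ¬(ρ i = ρ j ∧ ρ j = ρ (i + j))
  not_rainbow : ∀ i ≠ 0, ∀ j ≠ 0, i + j ≠ 0 → ¬(ρ i ≠ ρ j ∧ ρ i ≠ ρ (i + j) ∧ ρ j ≠ ρ (i + j))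

section ResidueBlowUp

variable {m d : ℕ} {C : Finset ℕ} {χ : ℕ → ℕ} {ρ : ZMod d → ℕ} {a b x : ℕ}

theorem residueBlowUp_mul (hd : 0 < d) (ρ : ZMod d → ℕ) (χ : ℕ → ℕ) (x : ℕ) :
    residueBlowUp d ρ χ (d * x) = χ x := by
  rw [residueBlowUp, if_pos (dvd_mul_right d x), Nat.mul_div_cancel_left x hd]

theorem residueBlowUp_of_not_dvd (hx : ¬ d ∣ x) : residueBlowUp d ρ χ x = ρ x :=
  if_neg hx

theorem residueBlowUp_add_of_dvd_left (ha : d ∣ a) (hb : ¬ d ∣ b) :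
    residueBlowUp d ρ χ (a + b) = residueBlowUp d ρ χ b := by
  have hab : ¬ d ∣ a + b := (Nat.dvd_add_right ha).not.2 hb
  rw [residueBlowUp_of_not_dvd hab, residueBlowUp_of_not_dvd hb, Nat.cast_add,
    (ZMod.natCast_eq_zero_iff a d).2 ha, zero_add]

theorem natCast_ne_zero_of_not_dvd (hx : ¬ d ∣ x) : (x : ZMod d) ≠ 0 :=
  (ZMod.natCast_eq_zero_iff x d).not.2 hx

theorem IsResidueColoring.residueBlowUp_eq_of_dvd_add (hρ : IsResidueColoring ρ) (ha : ¬ d ∣ a)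
    (hb : ¬ d ∣ b) (hab : d ∣ a + b) : residueBlowUp d ρ χ a = residueBlowUp d ρ χ b := by
  have hcast : (a : ZMod d) = -b :=
    eq_neg_of_add_eq_zero_left (by exact_mod_cast (ZMod.natCast_eq_zero_iff (a + b) d).2 hab)
  rw [residueBlowUp_of_not_dvd ha, residueBlowUp_of_not_dvd hb, hcast,
    hρ.neg _ (natCast_ne_zero_of_not_dvd hb)]

theorem mem_Icc_of_mul_mem_Icc (hx : d * x ∈ Finset.Icc 1 (d * (m + 1) - 1)) :
    x ∈ Finset.Icc 1 m := by
  rw [Finset.mem_Icc] at hx ⊢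
  exact ⟨Nat.pos_of_mul_pos_left hx.1, Nat.le_of_lt_succ (Nat.lt_of_mul_lt_mul_left (a := d)
    (show d * x < d * (m + 1) by omega))⟩

namespace WeakGS

theorem residueBlowUp_mem_iff (h : WeakGS m C χ) (hC : ∀ i ≠ 0, ρ i ∉ C)
    (hx : x ∈ Finset.Icc 1 (d * (m + 1) - 1)) : residueBlowUp d ρ χ x ∈ C ↔ d ∣ x := by
  refine ⟨fun hxC => ?_, ?_⟩
  · by_contra hdx
    rw [residueBlowUp_of_not_dvd hdx] at hxC
    exact hC x (natCast_ne_zero_of_not_dvd hdx) hxC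
  · rintro ⟨y, rfl⟩
    have hd : 0 < d := Nat.pos_of_mul_pos_right (Finset.mem_Icc.1 hx).1
    rw [residueBlowUp_mul hd]
    exact h.1 y (mem_Icc_of_mul_mem_Icc hx)

theorem residueBlowUp_not_mono (h : WeakGS m C χ) (hρ : IsResidueColoring ρ)
    (hC : ∀ i ≠ 0, ρ i ∉ C) (ha : a ∈ Finset.Icc 1 (d * (m + 1) - 1))
    (hb : b ∈ Finset.Icc 1 (d * (m + 1) - 1)) (hab : a + b ∈ Finset.Icc 1 (d * (m + 1) - 1))
    (hne : a ≠ b) : ¬(residueBlowUp d ρ χ a = residueBlowUp d ρ χ b ∧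
      residueBlowUp d ρ χ b = residueBlowUp d ρ χ (a + b)) := by
  rintro ⟨heq, heq'⟩
  have hdab : d ∣ a ↔ d ∣ b := by
    rw [← h.residueBlowUp_mem_iff hC ha, ← h.residueBlowUp_mem_iff hC hb, heq]
  have hdb : d ∣ b ↔ d ∣ a + b := by
    rw [← h.residueBlowUp_mem_iff hC hb, ← h.residueBlowUp_mem_iff hC hab, heq']
  by_cases hda : d ∣ a
  · obtain ⟨b, rfl⟩ := hdab.1 hda
    obtain ⟨a, rfl⟩ := hda
    have hd : 0 < d := Nat.pos_of_mul_pos_right (Finset.mem_Icc.1 ha).1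
    simp only [← mul_add, residueBlowUp_mul hd] at hab heq heq'
    replace ha := Finset.mem_Icc.1 (mem_Icc_of_mul_mem_Icc ha)
    replace hb := Finset.mem_Icc.1 (mem_Icc_of_mul_mem_Icc hb)
    exact h.2.2.1 a (Finset.mem_Icc.2 ha) b (Finset.mem_Icc.2 hb) (a + b)
      (mem_Icc_of_mul_mem_Icc hab) rfl (ne_of_apply_ne _ hne) (by omega) (by omega) ⟨heq, heq'⟩
  · have hdb' := hdab.not.1 hda
    have hdab' := hdb.not.1 hdb'
    simp only [residueBlowUp_of_not_dvd hda, residueBlowUp_of_not_dvd hdb',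
      residueBlowUp_of_not_dvd hdab', Nat.cast_add] at heq heq'
    exact hρ.not_mono a (natCast_ne_zero_of_not_dvd hda) b (natCast_ne_zero_of_not_dvd hdb')
      (by exact_mod_cast natCast_ne_zero_of_not_dvd hdab') ⟨heq, heq'⟩

theorem residueBlowUp_not_rainbow (h : WeakGS m C χ) (hρ : IsResidueColoring ρ)
    (ha : a ∈ Finset.Icc 1 (d * (m + 1) - 1)) (hb : b ∈ Finset.Icc 1 (d * (m + 1) - 1))
    (hab : a + b ∈ Finset.Icc 1 (d * (m + 1) - 1)) :
    ¬(residueBlowUp d ρ χ a ≠ residueBlowUp d ρ χ b ∧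
      residueBlowUp d ρ χ a ≠ residueBlowUp d ρ χ (a + b) ∧
      residueBlowUp d ρ χ b ≠ residueBlowUp d ρ χ (a + b)) := by
  rintro ⟨hne, hne_left, hne_right⟩
  by_cases hda : d ∣ a <;> by_cases hdb : d ∣ b
  · obtain ⟨a, rfl⟩ := hda
    obtain ⟨b, rfl⟩ := hdb
    have hd : 0 < d := Nat.pos_of_mul_pos_right (Finset.mem_Icc.1 ha).1
    simp only [← mul_add, residueBlowUp_mul hd] at hab hne hne_left hne_right
    exact h.2.2.2 a (mem_Icc_of_mul_mem_Icc ha) b (mem_Icc_of_mul_mem_Icc hb) (a + b)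
      (mem_Icc_of_mul_mem_Icc hab) rfl ⟨hne, hne_left, hne_right⟩
  · exact hne_right (residueBlowUp_add_of_dvd_left hda hdb).symm
  · exact hne_left (by rw [add_comm, residueBlowUp_add_of_dvd_left hdb hda])
  by_cases hdab : d ∣ a + b
  · exact hne (hρ.residueBlowUp_eq_of_dvd_add hda hdb hdab)
  · simp only [residueBlowUp_of_not_dvd hda, residueBlowUp_of_not_dvd hdb,
      residueBlowUp_of_not_dvd hdab, Nat.cast_add] at hne hne_left hne_right
    exact hρ.not_rainbow a (natCast_ne_zero_of_not_dvd hda) b (natCast_ne_zero_of_not_dvd hdb)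
      (by exact_mod_cast natCast_ne_zero_of_not_dvd hdab) ⟨hne, hne_left, hne_right⟩

protected theorem residueBlowUp [NeZero d] (h : WeakGS m C χ) (hρ : IsResidueColoring ρ)
    (hC : ∀ i ≠ 0, ρ i ∉ C) :
    WeakGS (d * (m + 1) - 1) (C ∪ ({0}ᶜ : Finset (ZMod d)).image ρ) (residueBlowUp d ρ χ) := by
  have hd : 0 < d := NeZero.pos d
  have hmax : d * (m + 1) = d * m + d := mul_add_one d m
  refine ⟨fun x hx => ?_, fun i hi => ?_, ?_, ?_⟩
  · by_cases hdx : d ∣ x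
    · exact Finset.mem_union_left _ ((h.residueBlowUp_mem_iff hC hx).2 hdx)
    · rw [residueBlowUp_of_not_dvd hdx]
      exact Finset.mem_union_right _
        (Finset.mem_image_of_mem ρ (by simpa using natCast_ne_zero_of_not_dvd hdx))
  · rcases Finset.mem_union.1 hi with hi | hi
    · obtain ⟨y, hy, rfl⟩ := h.2.1 i hi
      rw [Finset.mem_Icc] at hy
      have hdy_le := Nat.mul_le_mul_left d hy.2
      have hdy_pos := Nat.mul_pos hd hy.1
      exact ⟨d * y, Finset.mem_Icc.2 (by omega), residueBlowUp_mul hd ρ χ y⟩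
    · obtain ⟨j, hj, rfl⟩ := Finset.mem_image.1 hi
      have hj0 : 0 < j.val := ZMod.val_pos.2 (by simpa using hj)
      have hjd := j.val_lt
      refine ⟨j.val, Finset.mem_Icc.2 (by omega), ?_⟩
      rw [residueBlowUp_of_not_dvd (Nat.not_dvd_of_pos_of_lt hj0 hjd), ZMod.natCast_zmod_val]
  · rintro a ha b hb _ hab rfl hne - -
    exact h.residueBlowUp_not_mono hρ hC ha hb hab hne
  · rintro a ha b hb _ hab rfl
    exact h.residueBlowUp_not_rainbow hρ ha hb hab

end WeakGS

end ResidueBlowUp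

theorem isResidueColoring_five {p q : ℕ} (hpq : p ≠ q) :
    IsResidueColoring (fun i : ZMod 5 => if i = 1 ∨ i = -1 then p else q) where
  neg i _ := by simp only [neg_eq_iff_eq_neg, neg_neg, or_comm]
  not_mono i hi j hj hij := by
    have hclass : ∀ i j : ZMod 5, i ≠ 0 → j ≠ 0 → i + j ≠ 0 →
        ¬((i = 1 ∨ i = -1 ↔ j = 1 ∨ j = -1) ∧ (j = 1 ∨ j = -1 ↔ i + j = 1 ∨ i + j = -1)) := by
      decide
    have hcolor (P Q : Prop) [Decidable P] [Decidable Q] (heq : ite P p q = ite Q p q) :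
        P ↔ Q := by
      split_ifs at heq <;> tauto
    exact fun heq => hclass i j hi hj hij (heq.imp (hcolor _ _) (hcolor _ _))
  not_rainbow i _ j _ _ := by
    split_ifs <;> simp

namespace WeakGS

theorem exists_eight : ∃ χ, WeakGS 8 (Finset.Icc 1 2) χ := by
  refine ⟨fun x => if x = 1 ∨ x = 2 ∨ x = 4 ∨ x = 8 then 1 else 2, by decide, by decide, ?_, ?_⟩
  · intro a ha b hb c hc
    simp only [Finset.mem_Icc] at ha hb hc
    dsimp only
    split_ifs <;> omega
  · intro a _ b _ c _ _
    dsimp only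
    split_ifs <;> simp

theorem exists_five_mul {r N : ℕ} {χ : ℕ → ℕ} (h : WeakGS N (Finset.Icc 1 r) χ) :
    ∃ χ', WeakGS (5 * (N + 1) - 1) (Finset.Icc 1 (r + 2)) χ' := by
  have hC : Finset.Icc 1 r ∪ ({0}ᶜ : Finset (ZMod 5)).image
      (fun i => if i = 1 ∨ i = -1 then r + 1 else r + 2) = Finset.Icc 1 (r + 2) := by
    have hcompl : ({0}ᶜ : Finset (ZMod 5)) = {1, -1, 2, -2} := by decide
    rw [hcompl, Finset.image_insert, Finset.image_insert, Finset.image_insert,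
      Finset.image_singleton, if_pos (by decide), if_pos (by decide), if_neg (by decide),
      if_neg (by decide)]
    ext i
    simp only [Finset.mem_union, Finset.mem_Icc, Finset.mem_insert, Finset.mem_singleton]
    omega
  refine ⟨_, hC ▸ h.residueBlowUp (isResidueColoring_five (by omega)) fun i _ => ?_⟩
  rw [Finset.mem_Icc]
  split_ifs <;> omega

theorem exists_even (k : ℕ) :
    ∃ χ : ℕ → ℕ, WeakGS (9 * 5 ^ k - 1) (Finset.Icc 1 (2 * k + 2)) χ := by
  induction k with
  | zero => exact exists_eight
  | succ k ih =>
    obtain ⟨χ, h⟩ := ih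
    have hN : 5 * (9 * 5 ^ k - 1 + 1) = 9 * 5 ^ (k + 1) := by
      rw [Nat.sub_add_cancel (Nat.mul_pos (by norm_num) (by positivity)), pow_succ]
      ring
    exact hN ▸ h.exists_five_mul

end WeakGS

theorem WGS_eq {r N : ℕ} (hlow : ∃ χ, WeakGS (N - 1) (Finset.Icc 1 r) χ)
    (hup : ∀ m, N ≤ m → ∀ χ, ¬ WeakGS m (Finset.Icc 1 r) χ) : WGS r = N := by
  obtain ⟨χ, hχ⟩ := hlow
  refine le_antisymm (Nat.sInf_le hup) (le_csInf ⟨N, hup⟩ fun n hn => ?_)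
  by_contra! hlt
  exact hn (N - 1) (Nat.le_sub_one_of_lt hlt) χ hχ

/-- For every even `r ≥ 2`, there is a weak Gallai–Schur `r`-coloring of
`[1, 9·5^((r-2)/2) - 1]`, no weak Gallai–Schur `r`-coloring of `[1, m]` exists
for any `m ≥ 9·5^((r-2)/2)`, and consequently `WGS r = 9·5^((r-2)/2)`. -/
theorem weak_WGS_even (r : ℕ) (hr : 2 ≤ r) (hre : Even r) :
    (∃ χ : ℕ → ℕ, WeakGS (9 * 5 ^ ((r - 2) / 2) - 1) (Finset.Icc 1 r) χ) ∧
    (∀ m, 9 * 5 ^ ((r - 2) / 2) ≤ m → ∀ χ : ℕ → ℕ, ¬ WeakGS m (Finset.Icc 1 r) χ) ∧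
    WGS r = 9 * 5 ^ ((r - 2) / 2) := by
  have hr' : 2 * ((r - 2) / 2) + 2 = r := by
    have := hre.two_dvd
    omega
  have hlow := WeakGS.exists_even ((r - 2) / 2)
  rw [hr'] at hlow
  have hup : ∀ m, 9 * 5 ^ ((r - 2) / 2) ≤ m → ∀ χ : ℕ → ℕ, ¬ WeakGS m (Finset.Icc 1 r) χ :=
    fun m hm χ h => hm.not_gt ((WeakGS.lt_of_card_eq ((r - 2) / 2) h).1 (by simp [hr']))
  exact ⟨hlow, hup, WGS_eq hlow hup⟩
end

section
/- For every odd integer r ≥ 3, there exists a weak Gallai-Schur r-coloring of [1, 18·5^((r−3)/2) − 1], and for every m ≥ 18·5^((r−3)/2) there is no weak Gallai-Schur r-coloring of [1, m]. Equivalently, the weak Gallai-Schur number WGS(r) equals 18·5^((r−3)/2) for odd r ≥ 3. -/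
/-! A weak Gallai–Schur coloring `χ` of `[1, m]` with `m ≥ 10` has a rigid start: either all odd
numbers have the color of `1`, or the numbers that are `±1` and `±2` modulo `5` have two distinct
colors `χ 1` and `χ 2`. As `x = a + (x - a)`, these colors do not occur on the multiples of `2`,
respectively `5`, so restricting `χ` to the multiples trades one color for a factor `2` of length,
or two colors for a factor `5`. Since `2² < 5`, the second trade is the better one; it is spent
until at most three colors are left. Both trades can be reversed, which gives extremal colorings. -/

variable {α : Type*}

/-- Weak Gallai–Schur colorings of `[1, m]` in an arbitrary type of colors, without the
requirement of surjectivity. The sum is a separate variable `c` so that numerals can be inserted. -/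
structure IsWeakGallaiSchur (m : ℕ) (χ : ℕ → α) : Prop where
  ne_of_add_eq (a b c : ℕ) : a + b = c → 0 < a → 0 < b → c ≤ m → a ≠ b → χ a = χ b → χ c ≠ χ a
  eq_or_eq_of_add_eq (a b c : ℕ) :
    a + b = c → 0 < a → 0 < b → c ≤ m → χ a ≠ χ b → χ c = χ a ∨ χ c = χ b

/-- The set of colors that `χ` uses on `[1, m]`. -/
def colors [DecidableEq α] (m : ℕ) (χ : ℕ → α) : Finset α := (Finset.Icc 1 m).image χ

lemma mem_colors [DecidableEq α] {m : ℕ} {χ : ℕ → α} {c : α} :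
    c ∈ colors m χ ↔ ∃ x, (1 ≤ x ∧ x ≤ m) ∧ χ x = c := by
  simp only [colors, Finset.mem_image, Finset.mem_Icc]

lemma apply_mem_colors [DecidableEq α] {m x : ℕ} (χ : ℕ → α) (hx : 1 ≤ x) (hxm : x ≤ m) :
    χ x ∈ colors m χ :=
  mem_colors.2 ⟨x, ⟨hx, hxm⟩, rfl⟩

lemma weakGS_iff {m : ℕ} {C : Finset ℕ} {χ : ℕ → ℕ} :
    WeakGS m C χ ↔ IsWeakGallaiSchur m χ ∧ colors m χ = C := by
  simp only [WeakGS, Finset.mem_Icc]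
  constructor
  · rintro ⟨hmem, hsurj, hmono, hrainbow⟩
    refine ⟨⟨fun a b c hc ha hb hcm hab hχ hca ↦ ?_, fun a b c hc ha hb hcm hχ ↦ ?_⟩, ?_⟩
    · exact hmono a (by lia) b (by lia) c (by lia) hc hab (by lia) (by lia)
        ⟨hχ, hχ.symm.trans hca.symm⟩
    · have := hrainbow a (by lia) b (by lia) c (by lia) hc
      grind
    · ext i
      rw [mem_colors]
      exact ⟨fun ⟨x, hx, hi⟩ ↦ hi ▸ hmem x hx, hsurj i⟩
  · rintro ⟨h, rfl⟩
    refine ⟨fun x hx ↦ apply_mem_colors χ hx.1 hx.2, fun i hi ↦ mem_colors.1 hi, ?_, ?_⟩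
    · rintro a ha b hb c hc hsum hab - - ⟨h₁, h₂⟩
      exact h.ne_of_add_eq a b c hsum ha.1 hb.1 hc.2 hab h₁ (h₂.symm.trans h₁.symm)
    · rintro a ha b hb c hc hsum ⟨h₁, h₂, h₃⟩
      rcases h.eq_or_eq_of_add_eq a b c hsum ha.1 hb.1 hc.2 h₁ with hca | hcb
      exacts [h₂ hca.symm, h₃ hcb.symm]

/-! ### Inflating a coloring by a residue coloring -/

/-- A coloring of the residues modulo `d` other than `0`, given as a function on `ℕ`, that is
symmetric under negation and has neither monochromatic nor rainbow solutions of `a + b = c`.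
Its values at the multiples of `d` are irrelevant. -/
structure IsResidueColoring_s14 (d : ℕ) (p : ℕ → α) : Prop where
  periodic : Function.Periodic p d
  symm (a b : ℕ) : ¬ d ∣ a → d ∣ a + b → p a = p b
  add_ne (a b : ℕ) : ¬ d ∣ a → ¬ d ∣ b → ¬ d ∣ a + b → p a = p b → p (a + b) ≠ p a
  add_eq_or_eq (a b : ℕ) :
    ¬ d ∣ a → ¬ d ∣ b → ¬ d ∣ a + b → p a ≠ p b → p (a + b) = p a ∨ p (a + b) = p b

/-- The 2-coloring of the nonzero residues modulo `5` that splits the complete graph on `ZMod 5`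
into a pentagon (differences `±1`, color `c₁`) and a pentagram (differences `±2`, color `c₂`). -/
def pentagonColoring (c₁ c₂ : α) (x : ℕ) : α := if x % 5 = 1 ∨ x % 5 = 4 then c₁ else c₂

namespace IsResidueColoring_s14

lemma const_two (c : α) : IsResidueColoring_s14 2 (fun _ ↦ c) where
  periodic _ := rfl
  symm _ _ _ _ := rfl
  add_ne a b ha hb hab := absurd hab (by lia)
  add_eq_or_eq _ _ _ _ _ _ := .inl rfl

lemma pentagon {c₁ c₂ : α} (hc : c₁ ≠ c₂) : IsResidueColoring_s14 5 (pentagonColoring c₁ c₂) where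
  periodic x := by simp only [pentagonColoring, Nat.add_mod_right]
  symm a b ha hab := by grind [pentagonColoring]
  add_ne a b ha hb hab := by grind [pentagonColoring]
  add_eq_or_eq a b _ _ _ := by grind [pentagonColoring]

end IsResidueColoring_s14

/-- The coloring that copies `χ` to the multiples of `d` and is `p` elsewhere. -/
def inflate (d : ℕ) (p χ : ℕ → α) (x : ℕ) : α := if d ∣ x then χ (x / d) else p x

section inflate

variable {d m : ℕ} {p χ : ℕ → α}

lemma inflate_mul (hd : 0 < d) (q : ℕ) : inflate d p χ (d * q) = χ q := by
  simp [inflate, hd]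

lemma inflate_of_not_dvd {x : ℕ} (hx : ¬ d ∣ x) : inflate d p χ x = p x :=
  if_neg hx

lemma le_of_mul_le_mul_add_sub_one {q : ℕ} (hd : 0 < d) (hq : d * q ≤ d * m + (d - 1)) : q ≤ m :=
  Nat.lt_succ_iff.1 (lt_of_mul_lt_mul_left (a := d) (by lia) d.zero_le)

lemma IsWeakGallaiSchur.inflate_add_eq_or_eq (h : IsWeakGallaiSchur m χ) (hd : 0 < d)
    (hp : IsResidueColoring_s14 d p) {a b : ℕ} (ha : 0 < a) (hb : 0 < b)
    (hm : a + b ≤ d * m + (d - 1)) (hχ : inflate d p χ a ≠ inflate d p χ b) :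
    inflate d p χ (a + b) = inflate d p χ a ∨ inflate d p χ (a + b) = inflate d p χ b := by
  by_cases hda : d ∣ a <;> by_cases hdb : d ∣ b
  · obtain ⟨⟨i, rfl⟩, ⟨j, rfl⟩⟩ := And.intro hda hdb
    rw [← mul_add] at hm ⊢
    simp only [inflate_mul hd] at hχ ⊢
    exact h.eq_or_eq_of_add_eq i j _ rfl (Nat.pos_of_mul_pos_left ha)
      (Nat.pos_of_mul_pos_left hb) (le_of_mul_le_mul_add_sub_one hd hm) hχ
  · right
    rw [inflate_of_not_dvd hdb, inflate_of_not_dvd ((Nat.dvd_add_right hda).not.2 hdb)]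
    obtain ⟨i, rfl⟩ := hda
    rw [add_comm, mul_comm]
    exact hp.periodic.nat_mul i b
  · left
    rw [inflate_of_not_dvd hda, inflate_of_not_dvd ((Nat.dvd_add_left hdb).not.2 hda)]
    obtain ⟨j, rfl⟩ := hdb
    rw [mul_comm]
    exact hp.periodic.nat_mul j a
  · rw [inflate_of_not_dvd hda, inflate_of_not_dvd hdb] at *
    by_cases hdab : d ∣ a + b
    · exact absurd (hp.symm a b hda hdab) hχ
    · rw [inflate_of_not_dvd hdab]
      exact hp.add_eq_or_eq a b hda hdb hdab hχ

variable [DecidableEq α]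

lemma apply_mem_colors_of_periodic {x : ℕ} (hp : Function.Periodic p d) (hd : 0 < d)
    (hx : ¬ d ∣ x) : p x ∈ colors (d - 1) p := by
  have hpos : x % d ≠ 0 := mt Nat.dvd_of_mod_eq_zero hx
  have hlt : x % d < d := Nat.mod_lt x hd
  rw [← hp.map_mod_nat x]
  exact apply_mem_colors p (by lia) (by lia)

lemma colors_inflate (hd : 0 < d) (hp : Function.Periodic p d) :
    colors (d * m + (d - 1)) (inflate d p χ) = colors m χ ∪ colors (d - 1) p := by
  ext c
  rw [Finset.mem_union]
  constructor
  · intro hc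
    obtain ⟨x, ⟨hx, hxm⟩, rfl⟩ := mem_colors.1 hc
    by_cases hdx : d ∣ x
    · obtain ⟨q, rfl⟩ := hdx
      rw [inflate_mul hd]
      exact .inl (apply_mem_colors χ (Nat.pos_of_mul_pos_left hx)
        (le_of_mul_le_mul_add_sub_one hd hxm))
    · rw [inflate_of_not_dvd hdx]
      exact .inr (apply_mem_colors_of_periodic hp hd hdx)
  · rintro (hc | hc) <;> obtain ⟨x, ⟨hx, hxm⟩, rfl⟩ := mem_colors.1 hc
    · have hdx : d * x ≤ d * m := Nat.mul_le_mul_left d hxm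
      exact mem_colors.2 ⟨d * x, ⟨Nat.mul_pos hd hx, by lia⟩, inflate_mul hd x⟩
    · have hdx : ¬ d ∣ x := Nat.not_dvd_of_pos_of_lt hx (by lia)
      exact mem_colors.2 ⟨x, ⟨hx, by lia⟩, inflate_of_not_dvd hdx⟩

lemma apply_ne_of_disjoint_colors {q x : ℕ} (hd : 0 < d) (hp : Function.Periodic p d)
    (hfresh : Disjoint (colors m χ) (colors (d - 1) p)) (hq : 0 < q)
    (hqm : d * q ≤ d * m + (d - 1)) (hx : ¬ d ∣ x) : χ q ≠ p x :=
  Finset.disjoint_iff_ne.1 hfresh _ (apply_mem_colors χ hq (le_of_mul_le_mul_add_sub_one hd hqm))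
    _ (apply_mem_colors_of_periodic hp hd hx)

lemma IsWeakGallaiSchur.inflate_add_ne (h : IsWeakGallaiSchur m χ) (hd : 0 < d)
    (hp : IsResidueColoring_s14 d p) (hfresh : Disjoint (colors m χ) (colors (d - 1) p)) {a b : ℕ}
    (ha : 0 < a) (hb : 0 < b) (hm : a + b ≤ d * m + (d - 1)) (hab : a ≠ b)
    (hχ : inflate d p χ a = inflate d p χ b) : inflate d p χ (a + b) ≠ inflate d p χ a := by
  have hne {q x : ℕ} := apply_ne_of_disjoint_colors (q := q) (x := x) hd hp.periodic hfresh
  by_cases hda : d ∣ a <;> by_cases hdb : d ∣ b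
  · obtain ⟨⟨i, rfl⟩, ⟨j, rfl⟩⟩ := And.intro hda hdb
    rw [← mul_add] at hm ⊢
    rw [inflate_mul hd, inflate_mul hd] at hχ ⊢
    exact h.ne_of_add_eq i j _ rfl (Nat.pos_of_mul_pos_left ha) (Nat.pos_of_mul_pos_left hb)
      (le_of_mul_le_mul_add_sub_one hd hm) (by rintro rfl; exact hab rfl) hχ
  · obtain ⟨i, rfl⟩ := hda
    rw [inflate_mul hd, inflate_of_not_dvd hdb] at hχ
    exact absurd hχ (hne (Nat.pos_of_mul_pos_left ha) (by lia) hdb)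
  · obtain ⟨j, rfl⟩ := hdb
    rw [inflate_mul hd, inflate_of_not_dvd hda] at hχ
    exact absurd hχ.symm (hne (Nat.pos_of_mul_pos_left hb) (by lia) hda)
  · rw [inflate_of_not_dvd hda, inflate_of_not_dvd hdb] at *
    by_cases hdab : d ∣ a + b
    · obtain ⟨q, hq⟩ := hdab
      rw [hq] at hm ⊢
      rw [inflate_mul hd]
      exact hne (Nat.pos_of_mul_pos_left (a := d) (by lia)) hm hda
    · rw [inflate_of_not_dvd hdab]
      exact hp.add_ne a b hda hdb hdab hχ

theorem IsWeakGallaiSchur.inflate (h : IsWeakGallaiSchur m χ) (hd : 0 < d)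
    (hp : IsResidueColoring_s14 d p) (hfresh : Disjoint (colors m χ) (colors (d - 1) p)) :
    IsWeakGallaiSchur (d * m + (d - 1)) (inflate d p χ) where
  ne_of_add_eq _ _ _ hc ha hb hm hab hχ := by
    subst hc
    exact h.inflate_add_ne hd hp hfresh ha hb hm hab hχ
  eq_or_eq_of_add_eq _ _ _ hc ha hb hm hχ := by
    subst hc
    exact h.inflate_add_eq_or_eq hd hp ha hb hm hχ

end inflate

/-! ### Extremal colorings -/

lemma colors_const [DecidableEq α] {m : ℕ} (hm : 1 ≤ m) (c : α) : colors m (fun _ ↦ c) = {c} :=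
  Finset.image_const (Finset.nonempty_Icc.2 hm) c

lemma colors_pentagonColoring [DecidableEq α] (c₁ c₂ : α) :
    colors 4 (pentagonColoring c₁ c₂) = {c₁, c₂} := by
  have : Finset.Icc 1 4 = {1, 2, 3, 4} := rfl
  simp [colors, this, pentagonColoring, Finset.pair_comm]

/-- The partition of `[1, 8]` into `{1, 2, 4, 8}` and `{3, 5, 6, 7}`, which shows that the bound
`9` for two colors is sharp. -/
def powersOfTwoColoring (x : ℕ) : ℕ := if x ∈ ({1, 2, 4, 8} : Finset ℕ) then 1 else 2

lemma isWeakGallaiSchur_powersOfTwoColoring : IsWeakGallaiSchur 8 powersOfTwoColoring where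
  ne_of_add_eq a b _ hc ha hb hm hab := by
    subst hc
    have ha' : a ≤ 7 := by lia
    have hb' : b ≤ 7 := by lia
    interval_cases a <;> interval_cases b <;> simp_all [powersOfTwoColoring]
  eq_or_eq_of_add_eq a b c _ _ _ _ := by grind [powersOfTwoColoring]

lemma colors_powersOfTwoColoring : colors 8 powersOfTwoColoring = {1, 2} := by decide

lemma exists_isWeakGallaiSchur_colors_eq_Icc (k : ℕ) :
    ∃ χ : ℕ → ℕ, IsWeakGallaiSchur (18 * 5 ^ k - 1) χ ∧
      colors (18 * 5 ^ k - 1) χ = Finset.Icc 1 (2 * k + 3) := by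
  induction k with
  | zero =>
    refine ⟨inflate 2 (fun _ ↦ 3) powersOfTwoColoring,
      isWeakGallaiSchur_powersOfTwoColoring.inflate two_pos (.const_two 3) ?_, ?_⟩
    · simp [colors_powersOfTwoColoring, colors_const]
    · change colors (2 * 8 + (2 - 1)) _ = _
      rw [colors_inflate two_pos (IsResidueColoring_s14.const_two 3).periodic,
        colors_powersOfTwoColoring, colors_const (by simp)]
      rfl
  | succ k ih =>
    obtain ⟨χ, hχ, hcolors⟩ := ih
    have hlen : 18 * 5 ^ (k + 1) - 1 = 5 * (18 * 5 ^ k - 1) + (5 - 1) := by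
      have := Nat.one_le_pow k 5 (by simp)
      lia
    have hp : IsResidueColoring_s14 5 (pentagonColoring (2 * k + 4) (2 * k + 5)) := .pentagon (by simp)
    rw [hlen]
    refine ⟨inflate 5 _ χ, hχ.inflate (by simp) hp ?_, ?_⟩
    · simp [hcolors, colors_pentagonColoring]
    · rw [colors_inflate (by simp) hp.periodic, hcolors, colors_pentagonColoring]
      ext i
      simp only [Finset.mem_union, Finset.mem_Icc, Finset.mem_insert, Finset.mem_singleton]
      lia

/-! ### The structure of weak Gallai–Schur colorings -/

namespace IsWeakGallaiSchur

variable {m : ℕ} {χ : ℕ → α}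

lemma apply_two_ne_apply_one (h : IsWeakGallaiSchur m χ) (hm : 9 ≤ m) : χ 2 ≠ χ 1 := by
  intro h₂
  have h₃ : χ 3 ≠ χ 1 := by grind [h.ne_of_add_eq 1 2 3]
  have h₄ : χ 4 = χ 1 ∨ χ 4 = χ 3 := by grind [h.eq_or_eq_of_add_eq 1 3 4]
  rcases h₄ with h₄ | h₄
  · have h₅ : χ 5 = χ 3 := by grind [h.eq_or_eq_of_add_eq 2 3 5, h.ne_of_add_eq 1 4 5]
    have h₆ : χ 6 = χ 3 := by grind [h.eq_or_eq_of_add_eq 1 5 6, h.ne_of_add_eq 2 4 6]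
    have h₈ : χ 8 = χ 1 := by grind [h.eq_or_eq_of_add_eq 2 6 8, h.ne_of_add_eq 3 5 8]
    have h₉ : χ 9 = χ 1 := by grind [h.eq_or_eq_of_add_eq 4 5 9, h.ne_of_add_eq 3 6 9]
    grind [h.ne_of_add_eq 1 8 9]
  have h₅ : χ 5 = χ 1 ∨ χ 5 = χ 3 := by grind [h.eq_or_eq_of_add_eq 2 3 5]
  rcases h₅ with h₅ | h₅
  · have h₆ : χ 6 = χ 3 := by grind [h.eq_or_eq_of_add_eq 2 4 6, h.ne_of_add_eq 1 5 6]
    have h₇ : χ 7 = χ 1 := by grind [h.eq_or_eq_of_add_eq 1 6 7, h.ne_of_add_eq 3 4 7]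
    have h₉ : χ 9 ≠ χ 1 := by grind [h.ne_of_add_eq 2 7 9]
    have h₉₃ : χ 9 ≠ χ 3 := by grind [h.ne_of_add_eq 3 6 9]
    grind [h.eq_or_eq_of_add_eq 4 5 9]
  · have h₇ : χ 7 = χ 1 := by grind [h.eq_or_eq_of_add_eq 2 5 7, h.ne_of_add_eq 3 4 7]
    have h₆ : χ 6 = χ 3 := by grind [h.eq_or_eq_of_add_eq 1 5 6, h.ne_of_add_eq 1 6 7]
    have h₈ : χ 8 = χ 1 := by grind [h.eq_or_eq_of_add_eq 2 6 8, h.ne_of_add_eq 3 5 8]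
    grind [h.ne_of_add_eq 1 7 8]

lemma apply_eq_of_two_decompositions (h : IsWeakGallaiSchur m χ) {c : α} (a b a' b' x : ℕ)
    (hχa : χ a ≠ c) (hχb : χ b = c) (hχa' : χ a' ≠ c) (hχb' : χ b' = c) (hχ : χ a ≠ χ a')
    (hx : a + b = x := by lia) (hx' : a' + b' = x := by lia) (hxm : x ≤ m := by lia)
    (ha : 0 < a := by lia) (hb : 0 < b := by lia) (ha' : 0 < a' := by lia)
    (hb' : 0 < b' := by lia) : χ x = c := by
  rcases h.eq_or_eq_of_add_eq a b x hx ha hb hxm (hχb ▸ hχa) with hxa | hxb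
  · rcases h.eq_or_eq_of_add_eq a' b' x hx' ha' hb' hxm (hχb' ▸ hχa') with hxa' | hxb'
    exacts [absurd (hxa.symm.trans hxa') hχ, hxb'.trans hχb']
  · exact hxb.trans hχb

lemma apply_five_eq_and_exists_third_color (h : IsWeakGallaiSchur m χ) (hm : 7 ≤ m)
    (h₂ : χ 2 ≠ χ 1) (h₃ : χ 3 = χ 1) :
    χ 5 = χ 1 ∧ ∃ d, (d = 4 ∨ d = 6) ∧ χ d ≠ χ 1 ∧ χ d ≠ χ 2 := by
  have h₄ : χ 4 ≠ χ 1 := by grind [h.ne_of_add_eq 1 3 4]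
  by_cases h₄₂ : χ 4 = χ 2
  · have h₆₂ : χ 6 ≠ χ 2 := by grind [h.ne_of_add_eq 2 4 6]
    have h₅ : χ 5 = χ 1 := by
      by_contra h₅
      have h₅₂ : χ 5 = χ 2 := by grind [h.eq_or_eq_of_add_eq 1 4 5]
      have h₆ : χ 6 = χ 1 := by grind [h.eq_or_eq_of_add_eq 1 5 6]
      have h₇ : χ 7 ≠ χ 1 := by grind [h.ne_of_add_eq 1 6 7]
      have h₇₂ : χ 7 ≠ χ 2 := by grind [h.ne_of_add_eq 2 5 7]
      grind [h.eq_or_eq_of_add_eq 3 4 7]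
    have h₆ : χ 6 ≠ χ 1 := by grind [h.ne_of_add_eq 1 5 6]
    exact ⟨h₅, 6, .inr rfl, h₆, h₆₂⟩
  · have h₅ : χ 5 = χ 1 :=
      h.apply_eq_of_two_decompositions 2 3 4 1 5 h₂ h₃ h₄ rfl (Ne.symm h₄₂)
    exact ⟨h₅, 4, .inl rfl, h₄, h₄₂⟩

lemma apply_four_eq_and_apply_six_ne (h : IsWeakGallaiSchur m χ) (hm : 6 ≤ m)
    (h₂ : χ 2 ≠ χ 1) (h₃ : χ 3 = χ 2) (h₅ : χ 5 = χ 1) :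
    χ 4 = χ 2 ∧ χ 6 ≠ χ 1 ∧ χ 6 ≠ χ 2 := by
  have h₄ : χ 4 = χ 2 := by grind [h.eq_or_eq_of_add_eq 1 3 4, h.ne_of_add_eq 1 4 5]
  exact ⟨h₄, by grind [h.ne_of_add_eq 1 5 6], by grind [h.ne_of_add_eq 2 4 6]⟩

lemma apply_five_ne_apply_two (h : IsWeakGallaiSchur m χ) (hm : 5 ≤ m) (h₃ : χ 3 = χ 2) :
    χ 5 ≠ χ 2 := by grind [h.ne_of_add_eq 2 3 5]

lemma exists_third_color (h : IsWeakGallaiSchur m χ) (hm : 9 ≤ m) :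
    ∃ d, 0 < d ∧ d ≤ m ∧ χ d ≠ χ 1 ∧ χ d ≠ χ 2 := by
  have h₂ := h.apply_two_ne_apply_one hm
  rcases h.eq_or_eq_of_add_eq 1 2 3 rfl (by simp) (by simp) (by lia) h₂.symm with h₃ | h₃
  · obtain ⟨-, d, hd, hdc⟩ := h.apply_five_eq_and_exists_third_color (by lia) h₂ h₃
    exact ⟨d, by lia, by lia, hdc⟩
  · by_cases h₅ : χ 5 = χ 1
    · exact ⟨6, by lia, by lia,
        (h.apply_four_eq_and_apply_six_ne (by lia) h₂ h₃ h₅).2⟩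
    · exact ⟨5, by lia, by lia, h₅, h.apply_five_ne_apply_two (by lia) h₃⟩

lemma apply_five_ne_apply_one (h : IsWeakGallaiSchur m χ) (hm : 10 ≤ m)
    (h₂ : χ 2 ≠ χ 1) (h₃ : χ 3 = χ 2) : χ 5 ≠ χ 1 := by
  intro h₅
  obtain ⟨h₄, h₆, h₆₂⟩ := h.apply_four_eq_and_apply_six_ne (by lia) h₂ h₃ h₅
  have h₇ : χ 7 = χ 1 := by
    grind [h.eq_or_eq_of_add_eq 1 6 7, h.eq_or_eq_of_add_eq 2 5 7]
  have h₈ : χ 8 = χ 2 := by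
    grind [h.eq_or_eq_of_add_eq 2 6 8, h.eq_or_eq_of_add_eq 3 5 8]
  have h₁₀ : χ 10 = χ 2 := by
    grind [h.eq_or_eq_of_add_eq 4 6 10, h.eq_or_eq_of_add_eq 3 7 10]
  grind [h.ne_of_add_eq 2 8 10]

lemma eq_apply_one_of_not_two_dvd (h : IsWeakGallaiSchur m χ) (hm : 7 ≤ m)
    (h₂ : χ 2 ≠ χ 1) (h₃ : χ 3 = χ 1) {x : ℕ} (hxm : x ≤ m) (hx : ¬ 2 ∣ x) : χ x = χ 1 := by
  obtain ⟨h₅, d, hd, hd₁, hd₂⟩ := h.apply_five_eq_and_exists_third_color hm h₂ h₃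
  induction x using Nat.strong_induction_on with
  | _ x ih =>
    by_cases hsmall : x = 1 ∨ x = 3 ∨ x = 5
    · rcases hsmall with rfl | rfl | rfl
      exacts [rfl, h₃, h₅]
    have hx₂ : χ (x - 2) = χ 1 := ih _ (by lia) (by lia) (by lia)
    have hxd : χ (x - d) = χ 1 := ih _ (by lia) (by lia) (by lia)
    exact h.apply_eq_of_two_decompositions 2 (x - 2) d (x - d) x h₂ hx₂ hd₁ hxd hd₂.symm

lemma eq_pentagonColoring_of_not_five_dvd (h : IsWeakGallaiSchur m χ) (h₂ : χ 2 ≠ χ 1)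
    (h₃ : χ 3 = χ 2) (h₄ : χ 4 = χ 1) (h₅ : χ 5 ≠ χ 1) (h₅₂ : χ 5 ≠ χ 2) {x : ℕ} (hxm : x ≤ m)
    (hx : ¬ 5 ∣ x) : χ x = pentagonColoring (χ 1) (χ 2) x := by
  induction x using Nat.strong_induction_on with
  | _ x ih =>
    by_cases hsmall : x < 5
    · interval_cases x <;> simp_all [pentagonColoring]
    have hA (y : ℕ) (hyx : y < x) (hy : y % 5 = 1 ∨ y % 5 = 4) : χ y = χ 1 :=
      (ih y hyx (by lia) (by lia)).trans (if_pos hy)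
    have hB (y : ℕ) (hyx : y < x) (hy : y % 5 = 2 ∨ y % 5 = 3) : χ y = χ 2 :=
      (ih y hyx (by lia) (by lia)).trans (if_neg (by lia))
    rw [pentagonColoring]
    split_ifs with hr
    · have hx₅ : χ (x - 5) = χ 1 := hA _ (by lia) (by lia)
      rcases hr with hr | hr
      · exact h.apply_eq_of_two_decompositions 5 (x - 5) 2 (x - 2) x h₅ hx₅ h₂
          (hA _ (by lia) (by lia)) h₅₂
      · exact h.apply_eq_of_two_decompositions 5 (x - 5) 3 (x - 3) x h₅ hx₅ (h₃ ▸ h₂)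
          (hA _ (by lia) (by lia)) (h₃ ▸ h₅₂)
    · have hx₅ : χ (x - 5) = χ 2 := hB _ (by lia) (by lia)
      have hr' : x % 5 = 2 ∨ x % 5 = 3 := by lia
      rcases hr' with hr | hr
      · have hx₃ : χ (x - 3) = χ 1 := hA _ (by lia) (by lia)
        exact h.apply_eq_of_two_decompositions 5 (x - 5) (x - 3) 3 x h₅₂ hx₅ (hx₃ ▸ h₂.symm) h₃
          (hx₃ ▸ h₅)
      · have hx₂ : χ (x - 2) = χ 1 := hA _ (by lia) (by lia)
        exact h.apply_eq_of_two_decompositions 5 (x - 5) (x - 2) 2 x h₅₂ hx₅ (hx₂ ▸ h₂.symm) rfl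
          (hx₂ ▸ h₅)

lemma dilate (h : IsWeakGallaiSchur m χ) {d : ℕ} (hd : 0 < d) :
    IsWeakGallaiSchur (m / d) (fun q ↦ χ (d * q)) where
  ne_of_add_eq a b c hc ha hb hcm hab :=
    h.ne_of_add_eq (d * a) (d * b) (d * c) (by rw [← hc, mul_add]) (Nat.mul_pos hd ha)
      (Nat.mul_pos hd hb) ((Nat.mul_le_mul_left d hcm).trans (Nat.mul_div_le m d))
      (by simpa [hd.ne'] using hab)
  eq_or_eq_of_add_eq a b c hc ha hb hcm :=
    h.eq_or_eq_of_add_eq (d * a) (d * b) (d * c) (by rw [← hc, mul_add]) (Nat.mul_pos hd ha)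
      (Nat.mul_pos hd hb) ((Nat.mul_le_mul_left d hcm).trans (Nat.mul_div_le m d))

lemma apply_mul_ne (h : IsWeakGallaiSchur m χ) {d a q : ℕ} {p : ℕ → α}
    (hp : IsResidueColoring_s14 d p) (hχ : ∀ x ≤ m, ¬ d ∣ x → χ x = p x) (ha : 0 < a) (had : a < d)
    (hq : 0 < q) (hqm : d * q ≤ m) (hqa : d * q ≠ 2 * a) : χ (d * q) ≠ p a := by
  have hdq : d ≤ d * q := Nat.le_mul_of_pos_right d hq
  have hda : ¬ d ∣ a := Nat.not_dvd_of_pos_of_lt ha had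
  have hsum : a + (d * q - a) = d * q := by lia
  have hdvd : d ∣ a + (d * q - a) := by rw [hsum]; exact dvd_mul_right d q
  have hdb : ¬ d ∣ d * q - a := fun hb ↦ hda ((Nat.dvd_add_left hb).1 hdvd)
  rw [← hχ a (by lia) hda]
  refine h.ne_of_add_eq a (d * q - a) _ hsum ha (by lia) hqm (by lia) ?_
  rw [hχ a (by lia) hda, hχ _ (by lia) hdb, hp.symm a _ hda hdvd]

end IsWeakGallaiSchur

section Reduction

variable [DecidableEq α] {m : ℕ} {χ : ℕ → α}

lemma card_colors_dilate_add_card_le {d : ℕ} (hd : 0 < d) {S : Finset α} (hS : S ⊆ colors m χ)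
    (hmul : ∀ q, 0 < q → d * q ≤ m → χ (d * q) ∉ S) :
    (colors (m / d) (fun q ↦ χ (d * q))).card + S.card ≤ (colors m χ).card := by
  have hmem : ∀ c ∈ colors (m / d) (fun q ↦ χ (d * q)), c ∈ colors m χ ∧ c ∉ S := by
    intro c hc
    obtain ⟨q, ⟨hq, hqm⟩, rfl⟩ := mem_colors.1 hc
    have hdq : d * q ≤ m := (Nat.mul_le_mul_left d hqm).trans (Nat.mul_div_le m d)
    exact ⟨apply_mem_colors χ (Nat.mul_pos hd hq) hdq, hmul q hq hdq⟩
  rw [← Finset.card_union_of_disjoint (Finset.disjoint_left.2 fun c hc ↦ (hmem c hc).2)]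
  exact Finset.card_le_card (Finset.union_subset (fun c hc ↦ (hmem c hc).1) hS)

namespace IsWeakGallaiSchur

lemma card_colors_dilate_two_add_one_le (h : IsWeakGallaiSchur m χ) (hm : 7 ≤ m)
    (h₂ : χ 2 ≠ χ 1) (h₃ : χ 3 = χ 1) :
    (colors (m / 2) (fun q ↦ χ (2 * q))).card + 1 ≤ (colors m χ).card := by
  have h₁ : χ 1 ∈ colors m χ := apply_mem_colors χ le_rfl (by lia)
  refine card_colors_dilate_add_card_le two_pos (Finset.singleton_subset_iff.2 h₁) fun q hq hqm ↦ ?_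
  rw [Finset.mem_singleton]
  obtain rfl | hq₁ := eq_or_ne q 1
  · exact h₂
  · exact h.apply_mul_ne (p := fun _ ↦ χ 1) (.const_two (χ 1))
      (fun _ ↦ h.eq_apply_one_of_not_two_dvd hm h₂ h₃) one_pos one_lt_two hq hqm (by lia)

lemma card_colors_dilate_five_add_two_le (h : IsWeakGallaiSchur m χ) (hm : 10 ≤ m)
    (h₂ : χ 2 ≠ χ 1) (h₃ : χ 3 = χ 2) :
    (colors (m / 5) (fun q ↦ χ (5 * q))).card + 2 ≤ (colors m χ).card := by
  have h₅ : χ 5 ≠ χ 1 := h.apply_five_ne_apply_one hm h₂ h₃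
  have h₅₂ : χ 5 ≠ χ 2 := h.apply_five_ne_apply_two (by lia) h₃
  have h₄ : χ 4 = χ 1 := by grind [h.eq_or_eq_of_add_eq 1 4 5, h.eq_or_eq_of_add_eq 1 3 4]
  have hχ (x : ℕ) : x ≤ m → ¬ 5 ∣ x → χ x = pentagonColoring (χ 1) (χ 2) x :=
    h.eq_pentagonColoring_of_not_five_dvd h₂ h₃ h₄ h₅ h₅₂
  have hS : {χ 1, χ 2} ⊆ colors m χ :=
    Finset.insert_subset (apply_mem_colors χ le_rfl (by lia))
      (Finset.singleton_subset_iff.2 (apply_mem_colors χ one_le_two (by lia)))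
  rw [← Finset.card_pair h₂.symm]
  refine card_colors_dilate_add_card_le (by simp) hS fun q hq hqm ↦ ?_
  rw [Finset.mem_insert, Finset.mem_singleton, not_or]
  have hne {a : ℕ} := h.apply_mul_ne (a := a) (.pentagon h₂.symm) hχ (q := q)
  exact ⟨hne (a := 1) (by simp) (by simp) hq hqm (by lia),
    hne (a := 2) (by simp) (by simp) hq hqm (by lia)⟩

theorem exists_dilate_card_colors_le (h : IsWeakGallaiSchur m χ) (hm : 10 ≤ m) :
    (colors (m / 2) (fun q ↦ χ (2 * q))).card + 1 ≤ (colors m χ).card ∨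
      (colors (m / 5) (fun q ↦ χ (5 * q))).card + 2 ≤ (colors m χ).card := by
  have h₂ : χ 2 ≠ χ 1 := h.apply_two_ne_apply_one (by lia)
  exact (h.eq_or_eq_of_add_eq 1 2 3 rfl one_pos two_pos (by lia) h₂.symm).imp
    (h.card_colors_dilate_two_add_one_le (by lia) h₂) (h.card_colors_dilate_five_add_two_le hm h₂)

end IsWeakGallaiSchur

end Reduction

/-- Intervals with a weak Gallai–Schur coloring in at most `r` colors from `α` are shorter
than `N`. -/
def ColorBound (α : Type*) [DecidableEq α] (r N : ℕ) : Prop :=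
  ∀ (m : ℕ) (χ : ℕ → α), IsWeakGallaiSchur m χ → (colors m χ).card ≤ r → m < N

namespace ColorBound

variable [DecidableEq α]

lemma one : ColorBound α 1 3 := by
  intro m χ h hcard
  by_contra! hm
  have hχ (x : ℕ) (hx : 1 ≤ x) (hx₃ : x ≤ 3) : χ x = χ 1 :=
    Finset.card_le_one.1 hcard _ (apply_mem_colors χ hx (by lia)) _
      (apply_mem_colors χ le_rfl (by lia))
  exact h.ne_of_add_eq 1 2 3 rfl one_pos two_pos hm (by simp) (hχ 2 (by simp) (by simp)).symm
    (hχ 3 (by simp) le_rfl)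

lemma two : ColorBound α 2 9 := by
  intro m χ h hcard
  by_contra! hm
  obtain ⟨d, hd, hdm, hd₁, hd₂⟩ := h.exists_third_color hm
  have hthree : 2 < (colors m χ).card := Finset.two_lt_card.2
    ⟨χ 1, apply_mem_colors χ le_rfl (by lia), χ 2, apply_mem_colors χ one_le_two (by lia),
      χ d, apply_mem_colors χ hd hdm, (h.apply_two_ne_apply_one hm).symm, hd₁.symm, hd₂.symm⟩
  exact hcard.not_gt hthree

lemma add_two {r N₁ N₂ N : ℕ} (h₁ : ColorBound α (r + 1) N₁) (h₂ : ColorBound α r N₂)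
    (hN₁ : 2 * N₁ ≤ N) (hN₂ : 5 * N₂ ≤ N) (hN : 10 ≤ N) : ColorBound α (r + 2) N := by
  intro m χ h hcard
  by_contra! hm
  rcases h.exists_dilate_card_colors_le (hN.trans hm) with hle | hle
  · have := h₁ _ _ (h.dilate two_pos) (by lia)
    lia
  · have := h₂ _ _ (h.dilate (d := 5) (by simp)) (by lia)
    lia

lemma mul_five_pow (k : ℕ) : ColorBound α (2 * k + 2) (9 * 5 ^ k) ∧
    ColorBound α (2 * k + 3) (18 * 5 ^ k) := by
  induction k with
  | zero => exact ⟨two, two.add_two one (by simp) (by simp) (by simp)⟩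
  | succ k ih =>
    obtain ⟨heven, hodd⟩ := ih
    have hpos : 0 < 5 ^ k := by positivity
    have heven' : ColorBound α (2 * k + 4) (9 * 5 ^ (k + 1)) :=
      hodd.add_two heven (by lia) (by lia) (by lia)
    exact ⟨heven', heven'.add_two hodd (by lia) (by lia) (by lia)⟩

end ColorBound

lemma not_weakGS_of_le {k m : ℕ} (hm : 18 * 5 ^ k ≤ m) (χ : ℕ → ℕ) :
    ¬ WeakGS m (Finset.Icc 1 (2 * k + 3)) χ := by
  intro hχ
  obtain ⟨h, hcolors⟩ := weakGS_iff.1 hχ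
  exact ((ColorBound.mul_five_pow k).2 m χ h (by simp [hcolors])).not_ge hm

lemma exists_weakGS (k : ℕ) : ∃ χ, WeakGS (18 * 5 ^ k - 1) (Finset.Icc 1 (2 * k + 3)) χ :=
  (exists_isWeakGallaiSchur_colors_eq_Icc k).imp fun _ ↦ weakGS_iff.2

lemma WGS_eq_of_exists_of_not {r n : ℕ} (hex : ∃ χ, WeakGS (n - 1) (Finset.Icc 1 r) χ)
    (hnot : ∀ m, n ≤ m → ∀ χ : ℕ → ℕ, ¬ WeakGS m (Finset.Icc 1 r) χ) : WGS r = n := by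
  refine le_antisymm (Nat.sInf_le hnot) (le_csInf ⟨n, hnot⟩ fun n' hn' ↦ ?_)
  by_contra! hlt
  obtain ⟨χ, hχ⟩ := hex
  exact hn' (n - 1) (Nat.le_sub_one_of_lt hlt) χ hχ

/-- For every odd `r ≥ 3`, there is a weak Gallai–Schur `r`-coloring of
`[1, 18·5^((r-3)/2) - 1]`, no weak Gallai–Schur `r`-coloring of `[1, m]` exists
for any `m ≥ 18·5^((r-3)/2)`, and consequently `WGS r = 18·5^((r-3)/2)`. -/
theorem weak_WGS_odd (r : ℕ) (hr : 3 ≤ r) (hro : Odd r) :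
    (∃ χ : ℕ → ℕ, WeakGS (18 * 5 ^ ((r - 3) / 2) - 1) (Finset.Icc 1 r) χ) ∧
    (∀ m, 18 * 5 ^ ((r - 3) / 2) ≤ m → ∀ χ : ℕ → ℕ, ¬ WeakGS m (Finset.Icc 1 r) χ) ∧
    WGS r = 18 * 5 ^ ((r - 3) / 2) := by
  obtain ⟨k, rfl⟩ : ∃ k, r = 2 * k + 3 := by
    obtain ⟨j, rfl⟩ := hro
    exact ⟨j - 1, by lia⟩
  rw [show (2 * k + 3 - 3) / 2 = k by lia]
  have hnot (m : ℕ) (hm : 18 * 5 ^ k ≤ m) (χ : ℕ → ℕ) := not_weakGS_of_le hm χ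
  exact ⟨exists_weakGS k, hnot, WGS_eq_of_exists_of_not (exists_weakGS k) hnot⟩
end

section
/- Every weak Gallai-Schur 2-coloring χ of [1, 8] satisfies χ(1) = χ(2) = χ(4) = χ(8), χ(3) = χ(5) = χ(6) = χ(7), and χ(1) ≠ χ(3); that is, up to relabeling of colors, the unique weak Gallai-Schur 2-coloring of [1,8] has color classes {1, 2, 4, 8} and {3, 5, 6, 7}. -/
/-- A weak Schur coloring of `[1, m]` with the two colors `p` and `q`: no solution of `a + b = c`
with `a`, `b`, `c` pairwise distinct is monochromatic. Positivity of `a` and `b` already separates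
them from `c`, so only `a ≠ b` is asked for. -/
structure IsWeakSchurTwoColoring {α : Type*} (m : ℕ) (p q : α) (χ : ℕ → α) : Prop where
  eq_or_eq : ∀ x ∈ Finset.Icc 1 m, χ x = p ∨ χ x = q
  not_monochromatic : ∀ a b c, 0 < a → 0 < b → a ≠ b → a + b = c → c ≤ m →
    ¬(χ a = χ b ∧ χ b = χ c)

theorem WeakGS.isWeakSchurTwoColoring {m p q : ℕ} {χ : ℕ → ℕ} (h : WeakGS m {p, q} χ) :
    IsWeakSchurTwoColoring m p q χ := by
  obtain ⟨hmem, -, hmono, -⟩ := h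
  refine ⟨fun x hx ↦ by simpa using hmem x hx, fun a b c ha hb hab habc hc ↦ ?_⟩
  exact hmono a (Finset.mem_Icc.2 (by lia)) b (Finset.mem_Icc.2 (by lia))
    c (Finset.mem_Icc.2 (by lia)) habc hab (by lia) (by lia)

namespace IsWeakSchurTwoColoring

variable {α : Type*} {m : ℕ} {p q : α} {χ : ℕ → α}

theorem symm (h : IsWeakSchurTwoColoring m p q χ) : IsWeakSchurTwoColoring m q p χ :=
  ⟨fun x hx ↦ (h.eq_or_eq x hx).symm, h.not_monochromatic⟩

theorem color_add (h : IsWeakSchurTwoColoring m p q χ) (a b c : ℕ)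
    (ha : χ a = p) (hb : χ b = p)
    (habc : 0 < a ∧ 0 < b ∧ a ≠ b ∧ a + b = c ∧ c ≤ m := by lia) : χ c = q := by
  obtain ⟨ha₀, hb₀, hab, hsum, hcm⟩ := habc
  refine (h.eq_or_eq c (Finset.mem_Icc.2 (by lia))).resolve_left fun hc ↦ ?_
  exact h.not_monochromatic a b c ha₀ hb₀ hab hsum hcm ⟨ha.trans hb.symm, hb.trans hc.symm⟩

theorem color_summand (h : IsWeakSchurTwoColoring m p q χ) (a b c : ℕ)
    (ha : χ a = p) (hc : χ c = p)
    (habc : 0 < a ∧ 0 < b ∧ a ≠ b ∧ a + b = c ∧ c ≤ m := by lia) : χ b = q := by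
  obtain ⟨ha₀, hb₀, hab, hsum, hcm⟩ := habc
  refine (h.eq_or_eq b (Finset.mem_Icc.2 (by lia))).resolve_left fun hb ↦ ?_
  exact h.not_monochromatic a b c ha₀ hb₀ hab hsum hcm ⟨ha.trans hb.symm, hb.trans hc.symm⟩

theorem color_two (h : IsWeakSchurTwoColoring m p q χ) (hm : 7 ≤ m) (h1 : χ 1 = p) :
    χ 2 = p := by
  refine (h.eq_or_eq 2 (Finset.mem_Icc.2 (by lia))).resolve_right fun h2 ↦ ?_
  obtain h3 | h3 := h.eq_or_eq 3 (Finset.mem_Icc.2 (by lia))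
  · have h4 : χ 4 = q := h.color_add 1 3 4 h1 h3
    have h6 : χ 6 = p := h.symm.color_add 2 4 6 h2 h4
    have h5 : χ 5 = q := h.color_summand 1 5 6 h1 h6
    have h7 : χ 7 = q := h.color_add 1 6 7 h1 h6
    exact h.not_monochromatic 2 5 7 (by lia) (by lia) (by lia) rfl hm
      ⟨h2.trans h5.symm, h5.trans h7.symm⟩
  · have h5 : χ 5 = p := h.symm.color_add 2 3 5 h2 h3
    have h4 : χ 4 = q := h.color_summand 1 4 5 h1 h5
    have h6 : χ 6 = q := h.color_add 1 5 6 h1 h5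
    exact h.not_monochromatic 2 4 6 (by lia) (by lia) (by lia) rfl (by lia)
      ⟨h2.trans h4.symm, h4.trans h6.symm⟩

theorem color_four (h : IsWeakSchurTwoColoring 8 p q χ) (h1 : χ 1 = p) : χ 4 = p := by
  have h2 : χ 2 = p := h.color_two (by lia) h1
  have h3 : χ 3 = q := h.color_add 1 2 3 h1 h2
  refine (h.eq_or_eq 4 (Finset.mem_Icc.2 (by lia))).resolve_right fun h4 ↦ ?_
  have h7 : χ 7 = p := h.symm.color_add 3 4 7 h3 h4
  have h5 : χ 5 = q := h.color_summand 2 5 7 h2 h7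
  have h8 : χ 8 = q := h.color_add 1 7 8 h1 h7
  exact h.not_monochromatic 3 5 8 (by lia) (by lia) (by lia) rfl le_rfl
    ⟨h3.trans h5.symm, h5.trans h8.symm⟩

end IsWeakSchurTwoColoring

theorem weak_two_color_unique_general {α : Type*} {p q : α} {χ : ℕ → α}
    (h : IsWeakSchurTwoColoring 8 p q χ) :
    (χ 1 = χ 2 ∧ χ 2 = χ 4 ∧ χ 4 = χ 8) ∧
    (χ 3 = χ 5 ∧ χ 5 = χ 6 ∧ χ 6 = χ 7) ∧
    χ 1 ≠ χ 3 := by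
  wlog h1 : χ 1 = p generalizing p q
  · exact this h.symm ((h.eq_or_eq 1 (Finset.mem_Icc.2 (by lia))).resolve_left h1)
  have h2 : χ 2 = p := h.color_two (by lia) h1
  have h3 : χ 3 = q := h.color_add 1 2 3 h1 h2
  have h4 : χ 4 = p := h.color_four h1
  have h5 : χ 5 = q := h.color_add 1 4 5 h1 h4
  have h6 : χ 6 = q := h.color_add 2 4 6 h2 h4
  have h8 : χ 8 = p := h.symm.color_add 3 5 8 h3 h5
  have h7 : χ 7 = q := h.color_summand 1 7 8 h1 h8
  have h12 : χ 1 = χ 2 := h1.trans h2.symm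
  refine ⟨⟨h12, h2.trans h4.symm, h4.trans h8.symm⟩,
    ⟨h3.trans h5.symm, h5.trans h6.symm, h6.trans h7.symm⟩, fun h13 ↦ ?_⟩
  exact h.not_monochromatic 1 2 3 (by lia) (by lia) (by lia) rfl (by lia)
    ⟨h12, h12.symm.trans h13⟩

/-- Every weak Gallai–Schur `2`-coloring `χ` of `[1, 8]` satisfies
`χ 1 = χ 2 = χ 4 = χ 8`, `χ 3 = χ 5 = χ 6 = χ 7`, and `χ 1 ≠ χ 3`; i.e., up to
relabeling of colors the unique such coloring has color classes `{1, 2, 4, 8}`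
and `{3, 5, 6, 7}`. -/
theorem weak_two_color_unique (χ : ℕ → ℕ)
    (h : WeakGS 8 (Finset.Icc 1 2) χ) :
    (χ 1 = χ 2 ∧ χ 2 = χ 4 ∧ χ 4 = χ 8) ∧
    (χ 3 = χ 5 ∧ χ 5 = χ 6 ∧ χ 6 = χ 7) ∧
    χ 1 ≠ χ 3 := by
  have colors : Finset.Icc 1 2 = {1, 2} := rfl
  rw [colors] at h
  exact weak_two_color_unique_general h.isWeakSchurTwoColoring
end

section
/- Every weak Gallai-Schur 3-coloring χ of [1, 17] has, up to relabeling of colors, the color classes {1, 3, 5, 7, 9, 11, 13, 15, 17}, {2, 4, 8, 16}, and {6, 10, 12, 14}. -/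
/-!
Let `a = χ 1`. Short chains of forced colors show that `2`, `3` and `5` must be colored as in the
theorem: the one long-lived alternative, in which `χ` depends on `x` modulo `5` off the multiples
of `5`, dies at `15 = 5 + 10 = 6 + 9 = 7 + 8`. From then on every odd `x` has color `a`, since
otherwise the decompositions `x = b + (x - b)` with `b ∈ {2, 4, 6}` give `2`, `4` and `6` the color
of `x`. Hence exactly the odd numbers have color `a`, and halving the even ones leaves a weak
Schur coloring of `[1, 8]` with two colors, of which there is only one.
-/

variable {α : Type*} {χ : ℕ → α} {n a b a' b' c : ℕ} {i j k : α}

/-- A weak Schur coloring of `[1, n]`: no `a + b = c` with `a`, `b`, `c` distinct is monochromatic.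
The summands are ordered by `a < b`, which with `0 < a` makes `a`, `b`, `a + b` distinct. -/
structure IsWeakSchur (χ : ℕ → α) (n : ℕ) : Prop where
  add_ne : ∀ a b, 0 < a → a < b → a + b ≤ n → χ a = χ b → χ (a + b) ≠ χ b

/-- A weak Schur coloring of `[1, n]` without rainbow solutions of `a + b = c`: a weak
Gallai–Schur coloring, except that the set of colors is left unspecified. -/
structure IsWeakGallaiSchur_s17 (χ : ℕ → α) (n : ℕ) : Prop extends IsWeakSchur χ n where
  add_eq_or_eq : ∀ a b, 0 < a → 0 < b → a + b ≤ n → χ a ≠ χ b →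
    χ (a + b) = χ a ∨ χ (a + b) = χ b

lemma exists_third_of_card_le_three {C : Finset α} (hC : C.card ≤ 3) (hi : i ∈ C) (hj : j ∈ C)
    (hij : i ≠ j) : ∃ k, ∀ l ∈ C, l = i ∨ l = j ∨ l = k := by
  classical
  have : Nonempty α := ⟨i⟩
  have hcard : ((C.erase i).erase j).card ≤ 1 := by
    rw [Finset.card_erase_of_mem (Finset.mem_erase.2 ⟨hij.symm, hj⟩), Finset.card_erase_of_mem hi]
    omega
  obtain ⟨k, hk⟩ := Finset.card_le_one_iff_subset_singleton.1 hcard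
  rw [← Finset.subset_insert_iff, ← Finset.subset_insert_iff] at hk
  exact ⟨k, fun l hl ↦ by simpa using hk hl⟩

namespace IsWeakSchur

lemma color_ne (h : IsWeakSchur χ n) (ha : χ a = k) (hb : χ b = k)
    (h0 : 0 < a := by omega) (hab : a < b := by omega) (hc : a + b = c := by omega)
    (hn : c ≤ n := by omega) : χ c ≠ k := by
  subst hc hb
  exact h.add_ne a b h0 hab hn ha

lemma comp_mul_left (h : IsWeakSchur χ n) {d : ℕ} (hd : 0 < d) :
    IsWeakSchur (fun x ↦ χ (d * x)) (n / d) where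
  add_ne a b ha hab hn hχ := by
    rw [mul_add]
    refine h.add_ne _ _ (by positivity) (by gcongr) ?_ hχ
    rw [← mul_add, mul_comm]
    exact (Nat.le_div_iff_mul_le hd).1 hn

section TwoColors

variable (h : IsWeakSchur χ n) (hχ : ∀ x, 0 < x → x ≤ n → χ x = i ∨ χ x = j) (h1 : χ 1 = i)
include h hχ h1

lemma two_color_apply_two (hn : 7 ≤ n) : χ 2 = i := by
  have eq_i {x : ℕ} (hx : χ x ≠ j) (h0 : 0 < x := by omega) (hxn : x ≤ n := by omega) :
      χ x = i := (hχ x h0 hxn).resolve_right hx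
  have eq_j {x : ℕ} (hx : χ x ≠ i) (h0 : 0 < x := by omega) (hxn : x ≤ n := by omega) :
      χ x = j := (hχ x h0 hxn).resolve_left hx
  by_contra h2
  replace h2 : χ 2 = j := eq_j h2
  rcases hχ 3 (by omega) (by omega) with h3 | h3
  · have h4 : χ 4 = j := eq_j (h.color_ne h1 h3)
    have h6 : χ 6 = i := eq_i (h.color_ne h2 h4)
    have h5 : χ 5 = j := eq_j fun h5 ↦ absurd h6 (h.color_ne h1 h5)
    have h7 : χ 7 = i := eq_i (h.color_ne h2 h5)
    exact absurd h7 (h.color_ne h1 h6)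
  · have h5 : χ 5 = i := eq_i (h.color_ne h2 h3)
    have h4 : χ 4 = j := eq_j fun h4 ↦ absurd h5 (h.color_ne h1 h4)
    have h6 : χ 6 = i := eq_i (h.color_ne h2 h4)
    exact absurd h6 (h.color_ne h1 h5)

theorem two_color_unique (hn : 8 ≤ n) :
    ∀ x ∈ Finset.Icc 1 n,
      (χ x = i ↔ x ∈ ({1, 2, 4, 8} : Finset ℕ)) ∧ (χ x = j ↔ x ∈ ({3, 5, 6, 7} : Finset ℕ)) := by
  have eq_i {x : ℕ} (hx : χ x ≠ j) (h0 : 0 < x := by omega) (hxn : x ≤ n := by omega) :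
      χ x = i := (hχ x h0 hxn).resolve_right hx
  have eq_j {x : ℕ} (hx : χ x ≠ i) (h0 : 0 < x := by omega) (hxn : x ≤ n := by omega) :
      χ x = j := (hχ x h0 hxn).resolve_left hx
  have h2 : χ 2 = i := h.two_color_apply_two hχ h1 (by omega)
  have h3 : χ 3 = j := eq_j (h.color_ne h1 h2)
  have h4 : χ 4 = i := eq_i fun h4 ↦ by
    have h7 : χ 7 = i := eq_i (h.color_ne h3 h4)
    have h5 : χ 5 = j := eq_j fun h5 ↦ absurd h7 (h.color_ne h2 h5)
    have h8 : χ 8 = i := eq_i (h.color_ne h3 h5)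
    exact absurd h8 (h.color_ne h1 h7)
  have h5 : χ 5 = j := eq_j (h.color_ne h1 h4)
  have h6 : χ 6 = j := eq_j (h.color_ne h2 h4)
  have h8 : χ 8 = i := eq_i (h.color_ne h3 h5)
  have h7 : χ 7 = j := eq_j fun h7 ↦ absurd h8 (h.color_ne h1 h7)
  have hij : i ≠ j := fun hij ↦ absurd (h3.trans hij.symm) (h.color_ne h1 h2)
  have hn8 : n ≤ 8 := by
    by_contra hn9
    have h9 : χ 9 = i := eq_i (h.color_ne h3 h6)
    exact absurd h9 (h.color_ne h1 h8)
  intro x hx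
  obtain ⟨hx1, hxn⟩ := Finset.mem_Icc.1 hx
  have hx8 : x ≤ 8 := hxn.trans hn8
  clear hx hχ eq_i eq_j
  interval_cases x <;> simp [*, hij.symm]

end TwoColors

end IsWeakSchur

namespace IsWeakGallaiSchur_s17

lemma color_eq_or_eq (h : IsWeakGallaiSchur_s17 χ n) (ha : χ a = i) (hb : χ b = j) (hij : i ≠ j)
    (ha0 : 0 < a := by omega) (hb0 : 0 < b := by omega) (hc : a + b = c := by omega)
    (hn : c ≤ n := by omega) : χ c = i ∨ χ c = j := by
  subst hc ha hb
  exact h.add_eq_or_eq a b ha0 hb0 hn hij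

lemma color_eq_of_two_sums (h : IsWeakGallaiSchur_s17 χ n) (ha : χ a = i) (hb : χ b = j)
    (ha' : χ a' = i) (hb' : χ b' = k) (hij : i ≠ j) (hik : i ≠ k) (hjk : j ≠ k)
    (ha0 : 0 < a := by omega) (hb0 : 0 < b := by omega) (hc : a + b = c := by omega)
    (ha0' : 0 < a' := by omega) (hb0' : 0 < b' := by omega) (hc' : a' + b' = c := by omega)
    (hn : c ≤ n := by omega) : χ c = i := by
  refine (h.color_eq_or_eq ha hb hij ha0 hb0 hc).resolve_right fun hcj ↦ ?_
  rcases h.color_eq_or_eq ha' hb' hik ha0' hb0' hc' with hci | hck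
  · exact hij (hci.symm.trans hcj)
  · exact hjk (hcj.symm.trans hck)

lemma apply_two_ne (h : IsWeakGallaiSchur_s17 χ n) (hn : 9 ≤ n) : χ 2 ≠ χ 1 := by
  obtain ⟨i, h1⟩ : ∃ i, χ 1 = i := ⟨_, rfl⟩
  obtain ⟨j, h3⟩ : ∃ j, χ 3 = j := ⟨_, rfl⟩
  rw [h1]
  intro h2
  have hij : i ≠ j := fun hij ↦ absurd (h3.trans hij.symm) (h.color_ne h1 h2)
  rcases h.color_eq_or_eq (c := 4) h1 h3 hij with h4 | h4
  · have h5 : χ 5 = j := (h.color_eq_or_eq h2 h3 hij).resolve_left (h.color_ne h1 h4)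
    have h6 : χ 6 = j := (h.color_eq_or_eq h1 h5 hij).resolve_left (h.color_ne h2 h4)
    have h8 : χ 8 = i := (h.color_eq_or_eq h2 h6 hij).resolve_right (h.color_ne h3 h5)
    have h9 : χ 9 = i := (h.color_eq_or_eq h4 h5 hij).resolve_right (h.color_ne h3 h6)
    exact absurd h9 (h.color_ne h1 h8)
  · rcases h.color_eq_or_eq (c := 5) h1 h4 hij with h5 | h5
    · have h6 : χ 6 = j := (h.color_eq_or_eq h2 h4 hij).resolve_left (h.color_ne h1 h5)
      have h7 : χ 7 = i := (h.color_eq_or_eq h1 h6 hij).resolve_right (h.color_ne h3 h4)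
      exact absurd h7 (h.color_ne h2 h5)
    · have h7 : χ 7 = i := (h.color_eq_or_eq h2 h5 hij).resolve_right (h.color_ne h3 h4)
      have h6 : χ 6 = j :=
        (h.color_eq_or_eq h1 h5 hij).resolve_left fun h6 ↦ absurd h7 (h.color_ne h1 h6)
      have h8 : χ 8 = j := (h.color_eq_or_eq h2 h6 hij).resolve_left (h.color_ne h1 h7)
      exact absurd h8 (h.color_ne h3 h5)

section ApplyTwoEqApplyThree

variable (h : IsWeakGallaiSchur_s17 χ n) (h1 : χ 1 = i) (h2 : χ 2 = j) (h3 : χ 3 = j) (hij : i ≠ j)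
include h h1 h2 h3 hij

lemma apply_four_ne_of_apply_two_of_apply_three (hn : 10 ≤ n) : χ 4 ≠ j := by
  intro h4
  obtain ⟨k, h6⟩ : ∃ k, χ 6 = k := ⟨_, rfl⟩
  have h5 : χ 5 = i := (h.color_eq_or_eq h1 h4 hij).resolve_right (h.color_ne h2 h3)
  have hik : i ≠ k := fun hik ↦ absurd (h6.trans hik.symm) (h.color_ne h1 h5)
  have hjk : j ≠ k := fun hjk ↦ absurd (h6.trans hjk.symm) (h.color_ne h2 h4)
  have h7 : χ 7 = i := (h.color_eq_or_eq h5 h2 hij).resolve_right (h.color_ne h3 h4)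
  have h8 : χ 8 = j := (h.color_eq_or_eq h5 h3 hij).resolve_left (h.color_ne h1 h7)
  have h9 : χ 9 = j := h.color_eq_of_two_sums h2 h7 h3 h6 hij.symm hjk hik
  have h10 : χ 10 = j := h.color_eq_of_two_sums h9 h1 h4 h6 hij.symm hjk hik
  exact absurd h10 (h.color_ne h2 h8)

lemma apply_four_ne_of_three_color (hχ : ∀ x, 0 < x → x ≤ n → χ x = i ∨ χ x = j ∨ χ x = k)
    (hn : 15 ≤ n) : χ 4 ≠ i := by
  intro h4
  have third {x : ℕ} (hxi : χ x ≠ i) (hxj : χ x ≠ j) (h0 : 0 < x := by omega)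
      (hxn : x ≤ n := by omega) : χ x = k :=
    ((hχ x h0 hxn).resolve_left hxi).resolve_left hxj
  have h5i : χ 5 ≠ i := h.color_ne h1 h4
  have h5j : χ 5 ≠ j := h.color_ne h2 h3
  have h5 : χ 5 = k := third h5i h5j
  have hik : i ≠ k := fun hik ↦ h5i (h5.trans hik.symm)
  have hjk : j ≠ k := fun hjk ↦ h5j (h5.trans hjk.symm)
  have h6 : χ 6 = i := h.color_eq_of_two_sums h4 h2 h1 h5 hij hik hjk
  have h7 : χ 7 = j := (h.color_eq_or_eq h4 h3 hij).resolve_left (h.color_ne h1 h6)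
  have h8 : χ 8 = j := h.color_eq_of_two_sums h7 h1 h3 h5 hij.symm hjk hik
  have h9 : χ 9 = i := h.color_eq_of_two_sums h1 h8 h4 h5 hij hik hjk
  have h10 : χ 10 = k := third (h.color_ne h1 h9) (h.color_ne h2 h8)
  have h15 : χ 15 = k := third (h.color_ne h6 h9) (h.color_ne h7 h8)
  exact absurd h15 (h.color_ne h5 h10)

end ApplyTwoEqApplyThree

lemma apply_five_eq (h : IsWeakGallaiSchur_s17 χ n) (hn : 7 ≤ n) (h1 : χ 1 = i) (h2 : χ 2 = j)
    (h3 : χ 3 = i) (hij : i ≠ j) : χ 5 = i := by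
  refine (h.color_eq_or_eq h3 h2 hij).resolve_right fun h5 ↦ ?_
  have h4i : χ 4 ≠ i := h.color_ne h1 h3
  have h4 : χ 4 = j := by
    rcases h.color_eq_or_eq (c := 5) h1 rfl h4i.symm with h5' | h5'
    · exact absurd (h5'.symm.trans h5) hij
    · exact h5'.symm.trans h5
  have h6 : χ 6 = i := (h.color_eq_or_eq h1 h5 hij).resolve_right (h.color_ne h2 h4)
  have h7 : χ 7 = j := (h.color_eq_or_eq h3 h4 hij).resolve_left (h.color_ne h1 h6)
  exact absurd h7 (h.color_ne h2 h5)

section ThreeColors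

variable {C : Finset α} (h : IsWeakGallaiSchur_s17 χ n) (hC : C.card ≤ 3)
  (hχ : ∀ x ∈ Finset.Icc 1 n, χ x ∈ C)
include h hC hχ

lemma apply_three_eq (hn : 15 ≤ n) : χ 3 = χ 1 := by
  by_contra h31
  have h21 : χ 2 ≠ χ 1 := h.apply_two_ne (by omega)
  have h32 : χ 3 = χ 2 := (h.color_eq_or_eq rfl rfl h21.symm).resolve_left h31
  have h4 : χ 4 = χ 1 := (h.color_eq_or_eq rfl h32 h21.symm).resolve_right
    (h.apply_four_ne_of_apply_two_of_apply_three rfl rfl h32 h21.symm (by omega))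
  obtain ⟨k, hk⟩ := exists_third_of_card_le_three hC (hχ 1 (Finset.mem_Icc.2 (by omega)))
    (hχ 2 (Finset.mem_Icc.2 (by omega))) h21.symm
  exact h.apply_four_ne_of_three_color rfl rfl h32 h21.symm
    (fun x h0 hxn ↦ hk _ (hχ x (Finset.mem_Icc.2 ⟨h0, hxn⟩))) hn h4

lemma apply_eq_apply_one_of_odd (hn : 15 ≤ n) {x : ℕ} (hx : Odd x) (hxn : x ≤ n) :
    χ x = χ 1 := by
  induction x using Nat.strong_induction_on with
  | _ x ih =>
    have h2 : χ 2 ≠ χ 1 := h.apply_two_ne (by omega)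
    have h3 : χ 3 = χ 1 := h.apply_three_eq hC hχ hn
    have h5 : χ 5 = χ 1 := h.apply_five_eq (by omega) rfl rfl h3 h2.symm
    by_contra hx1
    have hx7 : 7 ≤ x := by
      by_contra hx7
      interval_cases x <;> contradiction
    have even_color {b : ℕ} (hb : χ b ≠ χ 1) (hb_even : Even b) (h0 : 0 < b) (hbx : b < x) :
        χ b = χ x := by
      have hxb : χ (x - b) = χ 1 :=
        ih (x - b) (by omega) (Nat.Odd.sub_even hbx.le hx hb_even) (by omega)
      exact ((h.color_eq_or_eq hxb rfl hb.symm).resolve_left hx1).symm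
    have h2x : χ 2 = χ x := even_color h2 (by decide) (by omega) (by omega)
    have h4x : χ 4 = χ x := even_color (h.color_ne rfl h3) (by decide) (by omega) (by omega)
    have h6x : χ 6 = χ x := even_color (h.color_ne rfl h5) (by decide) (by omega) (by omega)
    exact absurd h6x (h.color_ne h2x h4x)

theorem apply_eq_apply_one_iff_odd (hn : 15 ≤ n) {x : ℕ} (hx : x ∈ Finset.Icc 1 n) :
    χ x = χ 1 ↔ Odd x := by
  obtain ⟨h0, hxn⟩ := Finset.mem_Icc.1 hx
  refine ⟨fun hx1 ↦ ?_, fun hodd ↦ h.apply_eq_apply_one_of_odd hC hχ hn hodd hxn⟩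
  by_contra hodd
  rw [Nat.not_odd_iff_even] at hodd
  obtain rfl | hx2 := eq_or_ne x 2
  · exact h.apply_two_ne (by omega) hx1
  · have hpred : χ (x - 1) = χ 1 :=
      h.apply_eq_apply_one_of_odd hC hχ hn (Nat.Even.sub_odd h0 hodd odd_one) (by omega)
    have hx4 : x ≠ 1 ∧ x ≠ 3 := by constructor <;> rintro rfl <;> exact absurd hodd (by decide)
    exact absurd hx1 (h.color_ne rfl hpred)

lemma exists_third_color_even_iff (hn : 16 ≤ n) :
    ∃ k, (∀ l ∈ C, l = χ 1 ∨ l = χ 2 ∨ l = k) ∧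
      ∀ y ∈ Finset.Icc 1 (n / 2),
        (χ (2 * y) = χ 2 ↔ y ∈ ({1, 2, 4, 8} : Finset ℕ)) ∧
        (χ (2 * y) = k ↔ y ∈ ({3, 5, 6, 7} : Finset ℕ)) := by
  obtain ⟨k, hk⟩ := exists_third_of_card_le_three hC (hχ 1 (Finset.mem_Icc.2 (by omega)))
    (hχ 2 (Finset.mem_Icc.2 (by omega))) (h.apply_two_ne (by omega)).symm
  refine ⟨k, hk, (h.comp_mul_left two_pos).two_color_unique (fun y h0 hyn ↦ ?_) rfl (by omega)⟩
  have hy : 2 * y ∈ Finset.Icc 1 n := by rw [Finset.mem_Icc]; omega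
  have hne : χ (2 * y) ≠ χ 1 :=
    (h.apply_eq_apply_one_iff_odd hC hχ (by omega) hy).not.2 (by simp)
  exact (hk _ (hχ _ hy)).resolve_left hne

end ThreeColors

end IsWeakGallaiSchur_s17

lemma WeakGS.isWeakGallaiSchur {C : Finset ℕ} {χ : ℕ → ℕ} (h : WeakGS n C χ) :
    IsWeakGallaiSchur_s17 χ n := by
  obtain ⟨-, -, hmono, hrainbow⟩ := h
  constructor
  · constructor
    intro a b ha hab hn hχ hc
    exact hmono a (Finset.mem_Icc.2 (by omega)) b (Finset.mem_Icc.2 (by omega))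
      (a + b) (Finset.mem_Icc.2 (by omega)) rfl (by omega) (by omega) (by omega) ⟨hχ, hc.symm⟩
  · intro a b ha hb hn hχ
    by_contra! hc
    exact hrainbow a (Finset.mem_Icc.2 (by omega)) b (Finset.mem_Icc.2 (by omega))
      (a + b) (Finset.mem_Icc.2 (by omega)) rfl ⟨hχ, hc.1.symm, hc.2.symm⟩

theorem weak_three_color_unique_general [DecidableEq α] {C : Finset α} (h : IsWeakGallaiSchur_s17 χ n)
    (hn : 16 ≤ n) (hC : C.card ≤ 3) (hχ : ∀ x ∈ Finset.Icc 1 n, χ x ∈ C) :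
    ∃ c₁ c₂ c₃ : α, ({c₁, c₂, c₃} : Finset α) = C ∧
      ∀ x ∈ Finset.Icc 1 n,
        (χ x = c₁ ↔ Odd x) ∧
        (χ x = c₂ ↔ x ∈ ({2, 4, 8, 16} : Finset ℕ)) ∧
        (χ x = c₃ ↔ x ∈ ({6, 10, 12, 14} : Finset ℕ)) := by
  have odd_iff {x : ℕ} (hx : x ∈ Finset.Icc 1 n) : χ x = χ 1 ↔ Odd x :=
    h.apply_eq_apply_one_iff_odd hC hχ (by omega) hx
  obtain ⟨k, hk, even_iff⟩ := h.exists_third_color_even_iff hC hχ hn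
  have h6 : χ 6 = k := (even_iff 3 (Finset.mem_Icc.2 (by omega))).2.2 (by decide)
  have h2 : χ 2 ≠ χ 1 := h.apply_two_ne (by omega)
  have hk1 : k ≠ χ 1 := h6 ▸ (odd_iff (Finset.mem_Icc.2 (by omega))).not.2 (by decide)
  have hcolors : {χ 1, χ 2, k} = C := by
    ext l
    simp only [Finset.mem_insert, Finset.mem_singleton]
    refine ⟨?_, hk l⟩
    rintro (rfl | rfl | rfl)
    exacts [hχ 1 (Finset.mem_Icc.2 (by omega)), hχ 2 (Finset.mem_Icc.2 (by omega)),
      h6 ▸ hχ 6 (Finset.mem_Icc.2 (by omega))]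
  refine ⟨χ 1, χ 2, k, hcolors, fun x hx ↦ ⟨odd_iff hx, ?_⟩⟩
  obtain ⟨y, rfl | rfl⟩ := Nat.even_or_odd' x
  · convert even_iff y (by rw [Finset.mem_Icc] at hx ⊢; omega) using 2 <;>
      simp only [Finset.mem_insert, Finset.mem_singleton] <;> omega
  · rw [(odd_iff hx).2 (odd_two_mul_add_one y)]
    simp only [h2.symm, hk1.symm, false_iff, Finset.mem_insert, Finset.mem_singleton]
    omega

/-- Every weak Gallai–Schur `3`-coloring of `[1, 17]` has, up to relabeling of
colors, the color classes `{1, 3, 5, 7, 9, 11, 13, 15, 17}`, `{2, 4, 8, 16}`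
and `{6, 10, 12, 14}`. -/
theorem weak_three_color_unique (χ : ℕ → ℕ)
    (h : WeakGS 17 (Finset.Icc 1 3) χ) :
    ∃ c₁ c₂ c₃ : ℕ, ({c₁, c₂, c₃} : Finset ℕ) = Finset.Icc 1 3 ∧
      ∀ x ∈ Finset.Icc 1 17,
        (χ x = c₁ ↔ x ∈ ({1, 3, 5, 7, 9, 11, 13, 15, 17} : Finset ℕ)) ∧
        (χ x = c₂ ↔ x ∈ ({2, 4, 8, 16} : Finset ℕ)) ∧
        (χ x = c₃ ↔ x ∈ ({6, 10, 12, 14} : Finset ℕ)) := by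
  obtain ⟨c₁, c₂, c₃, hc, hx⟩ := weak_three_color_unique_general h.isWeakGallaiSchur
    (by norm_num) (by simp) h.1
  have odd_iff : ∀ x ∈ Finset.Icc 1 17,
      Odd x ↔ x ∈ ({1, 3, 5, 7, 9, 11, 13, 15, 17} : Finset ℕ) := by decide
  exact ⟨c₁, c₂, c₃, hc, fun x hx17 ↦ ⟨(hx x hx17).1.trans (odd_iff x hx17), (hx x hx17).2⟩⟩
end

section
/- Every strong Gallai-Schur 3-coloring χ of [1, 9] has, up to relabeling of colors, either the color classes {1, 4, 6, 9}, {2, 3, 7, 8}, {5}, or the color classes {1, 3, 5, 7, 9}, {2, 8}, {4, 6}. -/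
/-- A strong Gallai–Schur coloring of the interval `[1, m]` with color set `C`:
`χ` maps `[1, m]` into `C`, is surjective onto `C`, admits no monochromatic
solution of `a + b = c` (with `a = b` allowed), and admits no rainbow solution
of `a + b = c`. -/
def StrongGS (m : ℕ) (C : Finset ℕ) (χ : ℕ → ℕ) : Prop :=
  (∀ x ∈ Finset.Icc 1 m, χ x ∈ C) ∧
  (∀ i ∈ C, ∃ x ∈ Finset.Icc 1 m, χ x = i) ∧
  (∀ a ∈ Finset.Icc 1 m, ∀ b ∈ Finset.Icc 1 m, ∀ c ∈ Finset.Icc 1 m,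
      a + b = c → ¬(χ a = χ b ∧ χ b = χ c)) ∧
  (∀ a ∈ Finset.Icc 1 m, ∀ b ∈ Finset.Icc 1 m, ∀ c ∈ Finset.Icc 1 m,
      a + b = c → ¬(χ a ≠ χ b ∧ χ a ≠ χ c ∧ χ b ≠ χ c))

/-!
In a coloring without monochromatic or rainbow solutions of `a + b = c`, two summands of the same
color exclude that color for their sum, and two summands of different colors confine their sum to
these two colors. Writing `A`, `B` for the colors of `1`, `2`, the number `3` is colored `A` or `B`.
If it is colored `B`, the rules force `A B B A` and a third color `C` at `5`, and then everything up
to `9`. If it is colored `A`, they force `A B A C A ? A`; here `8` avoids `A` and `C`, so it is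
colored `B` as only three colors are available. Then `2 + 6 = 8` excludes `B` at `6`, and
`2 + 4 = 6` leaves only `C`.
-/

variable {α : Type*} {n : ℕ} {χ : ℕ → α}

/-- The Gallai–Schur condition on a coloring of `[1, n]`, with an arbitrary type of colors and no
prescribed set of colors to be attained. A solution of `a + b = c` is encoded by its summands, and
`a = b` is allowed. -/
structure IsGallaiSchur (n : ℕ) (χ : ℕ → α) : Prop where
  not_monochromatic ⦃a b : ℕ⦄ : 0 < a → 0 < b → a + b ≤ n → ¬(χ a = χ b ∧ χ b = χ (a + b))
  not_rainbow ⦃a b : ℕ⦄ : 0 < a → 0 < b → a + b ≤ n →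
    ¬(χ a ≠ χ b ∧ χ a ≠ χ (a + b) ∧ χ b ≠ χ (a + b))

theorem StrongGS.isGallaiSchur {m : ℕ} {C : Finset ℕ} {χ : ℕ → ℕ} (h : StrongGS m C χ) :
    IsGallaiSchur m χ := by
  obtain ⟨-, -, hmono, hrainbow⟩ := h
  constructor <;> intro a b ha hb hab
  · exact hmono a (Finset.mem_Icc.mpr (by lia)) b (Finset.mem_Icc.mpr (by lia)) (a + b)
      (Finset.mem_Icc.mpr (by lia)) rfl
  · exact hrainbow a (Finset.mem_Icc.mpr (by lia)) b (Finset.mem_Icc.mpr (by lia)) (a + b)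
      (Finset.mem_Icc.mpr (by lia)) rfl

/-- `P`, `Q`, `R` are the color classes within `s` of the colors `c₁`, `c₂`, `c₃`. -/
def HasColorClasses {ι : Type*} (χ : ι → α) (s : Finset ι) (c₁ c₂ c₃ : α) (P Q R : Finset ι) :
    Prop :=
  ∀ x ∈ s, (χ x = c₁ ↔ x ∈ P) ∧ (χ x = c₂ ↔ x ∈ Q) ∧ (χ x = c₃ ↔ x ∈ R)

theorem hasColorClasses_of_forall_mem_eq {ι : Type*} [DecidableEq ι] {χ : ι → α}
    {s P Q R : Finset ι} {c₁ c₂ c₃ : α} (h₁₂ : c₁ ≠ c₂) (h₁₃ : c₁ ≠ c₃) (h₂₃ : c₂ ≠ c₃)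
    (hs : s ⊆ P ∪ Q ∪ R) (hP : ∀ x ∈ P, χ x = c₁) (hQ : ∀ x ∈ Q, χ x = c₂)
    (hR : ∀ x ∈ R, χ x = c₃) : HasColorClasses χ s c₁ c₂ c₃ P Q R := by
  intro x hx
  have hx' := hs hx
  grind

theorem triple_eq_of_card_le_three [DecidableEq α] {C : Finset α} (hcard : C.card ≤ 3) {a b c : α}
    (ha : a ∈ C) (hb : b ∈ C) (hc : c ∈ C) (hab : a ≠ b) (hac : a ≠ c) (hbc : b ≠ c) :
    {a, b, c} = C := by
  refine Finset.eq_of_subset_of_card_le (by simp [Finset.insert_subset_iff, ha, hb, hc]) ?_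
  rwa [Finset.card_eq_three.mpr ⟨a, b, c, hab, hac, hbc, rfl⟩]

namespace IsGallaiSchur

section Rules

variable (h : IsGallaiSchur n χ) (a b : ℕ) {x y z : α}
include h

theorem add_ne (hxa : χ a = x) (hxb : χ b = x) (ha : 0 < a := by lia) (hb : 0 < b := by lia)
    (hab : a + b ≤ n := by lia) : χ (a + b) ≠ x :=
  fun hx ↦ h.not_monochromatic ha hb hab ⟨hxa.trans hxb.symm, hxb.trans hx.symm⟩

theorem add_eq_or_eq (hxa : χ a = x) (hyb : χ b = y) (hxy : x ≠ y) (ha : 0 < a := by lia)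
    (hb : 0 < b := by lia) (hab : a + b ≤ n := by lia) : χ (a + b) = x ∨ χ (a + b) = y := by
  subst hxa hyb
  by_contra! hne
  exact h.not_rainbow ha hb hab ⟨hxy, hne.1.symm, hne.2.symm⟩

theorem add_ne_third (hxa : χ a = x) (hyb : χ b = y) (hxy : x ≠ y) (hzx : z ≠ x) (hzy : z ≠ y)
    (ha : 0 < a := by lia) (hb : 0 < b := by lia) (hab : a + b ≤ n := by lia) :
    χ (a + b) ≠ z := by
  rintro rfl
  exact (h.add_eq_or_eq a b hxa hyb hxy ha hb hab).elim hzx hzy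

end Rules

section ForcedColors

variable (h : IsGallaiSchur n χ)
include h

theorem two_ne_one (hn : 2 ≤ n := by lia) : χ 2 ≠ χ 1 :=
  h.add_ne 1 1 rfl rfl

theorem three_eq_one_or_eq_two (hn : 3 ≤ n := by lia) : χ 3 = χ 1 ∨ χ 3 = χ 2 :=
  h.add_eq_or_eq 1 2 rfl rfl h.two_ne_one.symm

theorem four_eq_one_of_three_eq_two (h₃ : χ 3 = χ 2) (hn : 4 ≤ n := by lia) : χ 4 = χ 1 :=
  (h.add_eq_or_eq 1 3 rfl h₃ h.two_ne_one.symm).resolve_right (h.add_ne 2 2 rfl rfl)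

theorem five_ne_one_of_three_eq_two (h₃ : χ 3 = χ 2) (hn : 5 ≤ n := by lia) : χ 5 ≠ χ 1 :=
  h.add_ne 1 4 rfl (h.four_eq_one_of_three_eq_two h₃)

theorem five_ne_two_of_three_eq_two (h₃ : χ 3 = χ 2) (hn : 5 ≤ n := by lia) : χ 5 ≠ χ 2 :=
  h.add_ne 2 3 rfl h₃

theorem four_ne_one_of_three_eq_one (h₃ : χ 3 = χ 1) (hn : 4 ≤ n := by lia) : χ 4 ≠ χ 1 :=
  h.add_ne 1 3 rfl h₃

theorem four_ne_two (hn : 4 ≤ n := by lia) : χ 4 ≠ χ 2 :=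
  h.add_ne 2 2 rfl rfl

theorem five_eq_one_of_three_eq_one (h₃ : χ 3 = χ 1) (hn : 5 ≤ n := by lia) : χ 5 = χ 1 :=
  (h.add_eq_or_eq 2 3 rfl h₃ h.two_ne_one).resolve_left
    (h.add_ne_third 1 4 rfl rfl (h.four_ne_one_of_three_eq_one h₃).symm h.two_ne_one
      h.four_ne_two.symm)

theorem seven_eq_one_of_three_eq_one (h₃ : χ 3 = χ 1) (hn : 7 ≤ n := by lia) : χ 7 = χ 1 :=
  (h.add_eq_or_eq 2 5 rfl (h.five_eq_one_of_three_eq_one h₃) h.two_ne_one).resolve_left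
    (h.add_ne_third 3 4 h₃ rfl (h.four_ne_one_of_three_eq_one h₃).symm h.two_ne_one
      h.four_ne_two.symm)

theorem eight_eq_two_of_three_eq_one (h₃ : χ 3 = χ 1)
    (h₈ : χ 8 = χ 1 ∨ χ 8 = χ 2 ∨ χ 8 = χ 4) (hn : 8 ≤ n := by lia) : χ 8 = χ 2 :=
  (h₈.resolve_left (h.add_ne 1 7 rfl (h.seven_eq_one_of_three_eq_one h₃))).resolve_right
    (h.add_ne 4 4 rfl rfl)

theorem six_eq_four_of_eight_eq_two (h₈ : χ 8 = χ 2) (hn : 8 ≤ n := by lia) : χ 6 = χ 4 := by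
  have h₆₂ : χ 6 ≠ χ 2 := fun h₆ ↦ absurd h₈ (h.add_ne 2 6 rfl h₆)
  exact (h.add_eq_or_eq 2 4 rfl rfl h.four_ne_two.symm).resolve_left h₆₂

end ForcedColors

theorem hasColorClasses_of_three_eq_two (h : IsGallaiSchur 9 χ) (h₃ : χ 3 = χ 2) :
    HasColorClasses χ (Finset.Icc 1 9) (χ 1) (χ 2) (χ 5) {1, 4, 6, 9} {2, 3, 7, 8} {5} := by
  have h₂₁ := h.two_ne_one
  have h₅₁ := h.five_ne_one_of_three_eq_two h₃
  have h₅₂ := h.five_ne_two_of_three_eq_two h₃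
  have h₄ : χ 4 = χ 1 := h.four_eq_one_of_three_eq_two h₃
  have h₆ : χ 6 = χ 1 :=
    (h.add_eq_or_eq 1 5 rfl rfl h₅₁.symm).resolve_right (h.add_ne_third 2 4 rfl h₄ h₂₁ h₅₂ h₅₁)
  have h₇ : χ 7 = χ 2 :=
    (h.add_eq_or_eq 2 5 rfl rfl h₅₂.symm).resolve_right (h.add_ne_third 3 4 h₃ h₄ h₂₁ h₅₂ h₅₁)
  have h₈ : χ 8 = χ 2 :=
    (h.add_eq_or_eq 1 7 rfl h₇ h₂₁.symm).resolve_left (h.add_ne 4 4 h₄ h₄)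
  have h₉ : χ 9 = χ 1 :=
    (h.add_eq_or_eq 1 8 rfl h₈ h₂₁.symm).resolve_right (h.add_ne 2 7 rfl h₇)
  exact hasColorClasses_of_forall_mem_eq h₂₁.symm h₅₁.symm h₅₂.symm (by decide)
    (by simp [h₄, h₆, h₉]) (by simp [h₃, h₇, h₈]) (by simp)

theorem hasColorClasses_of_three_eq_one (h : IsGallaiSchur 9 χ) (h₃ : χ 3 = χ 1)
    (h₈ : χ 8 = χ 1 ∨ χ 8 = χ 2 ∨ χ 8 = χ 4) :
    HasColorClasses χ (Finset.Icc 1 9) (χ 1) (χ 2) (χ 4) {1, 3, 5, 7, 9} {2, 8} {4, 6} := by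
  have h₂₁ := h.two_ne_one
  have h₄₁ := h.four_ne_one_of_three_eq_one h₃
  have h₄₂ := h.four_ne_two
  have h₅ : χ 5 = χ 1 := h.five_eq_one_of_three_eq_one h₃
  have h₇ : χ 7 = χ 1 := h.seven_eq_one_of_three_eq_one h₃
  replace h₈ : χ 8 = χ 2 := h.eight_eq_two_of_three_eq_one h₃ h₈
  have h₆ : χ 6 = χ 4 := h.six_eq_four_of_eight_eq_two h₈
  have h₉ : χ 9 = χ 1 :=
    (h.add_eq_or_eq 1 8 rfl h₈ h₂₁.symm).resolve_right
      (h.add_ne_third 3 6 h₃ h₆ h₄₁.symm h₂₁ h₄₂.symm)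
  exact hasColorClasses_of_forall_mem_eq h₂₁.symm h₄₁.symm h₄₂.symm (by decide)
    (by simp [h₃, h₅, h₇, h₉]) (by simp [h₈]) (by simp [h₆])

end IsGallaiSchur

theorem strong_three_color_unique_general [DecidableEq α] {C : Finset α} (hcard : C.card ≤ 3)
    (hC : ∀ x ∈ Finset.Icc 1 9, χ x ∈ C) (h : IsGallaiSchur 9 χ) :
    ∃ c₁ c₂ c₃ : α, {c₁, c₂, c₃} = C ∧
      (HasColorClasses χ (Finset.Icc 1 9) c₁ c₂ c₃ {1, 4, 6, 9} {2, 3, 7, 8} {5} ∨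
        HasColorClasses χ (Finset.Icc 1 9) c₁ c₂ c₃ {1, 3, 5, 7, 9} {2, 8} {4, 6}) := by
  have h₁ : χ 1 ∈ C := hC 1 (by decide)
  have h₂ : χ 2 ∈ C := hC 2 (by decide)
  have h₁₂ : χ 1 ≠ χ 2 := h.two_ne_one.symm
  rcases h.three_eq_one_or_eq_two with h₃ | h₃
  · have h₁₄ : χ 1 ≠ χ 4 := (h.four_ne_one_of_three_eq_one h₃).symm
    have hcolors : {χ 1, χ 2, χ 4} = C :=
      triple_eq_of_card_le_three hcard h₁ h₂ (hC 4 (by decide)) h₁₂ h₁₄ h.four_ne_two.symm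
    have h₈ : χ 8 = χ 1 ∨ χ 8 = χ 2 ∨ χ 8 = χ 4 := by
      simpa [← hcolors] using hC 8 (by decide)
    exact ⟨χ 1, χ 2, χ 4, hcolors, .inr (h.hasColorClasses_of_three_eq_one h₃ h₈)⟩
  · have h₁₅ : χ 1 ≠ χ 5 := (h.five_ne_one_of_three_eq_two h₃).symm
    have h₂₅ : χ 2 ≠ χ 5 := (h.five_ne_two_of_three_eq_two h₃).symm
    have hcolors : {χ 1, χ 2, χ 5} = C :=
      triple_eq_of_card_le_three hcard h₁ h₂ (hC 5 (by decide)) h₁₂ h₁₅ h₂₅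
    exact ⟨χ 1, χ 2, χ 5, hcolors, .inl (h.hasColorClasses_of_three_eq_two h₃)⟩

/-- Every strong Gallai–Schur `3`-coloring of `[1, 9]` has, up to relabeling of
colors, either the color classes `{1, 4, 6, 9}`, `{2, 3, 7, 8}`, `{5}`, or the
color classes `{1, 3, 5, 7, 9}`, `{2, 8}`, `{4, 6}`. -/
theorem strong_three_color_unique (χ : ℕ → ℕ)
    (h : StrongGS 9 (Finset.Icc 1 3) χ) :
    ∃ c₁ c₂ c₃ : ℕ, ({c₁, c₂, c₃} : Finset ℕ) = Finset.Icc 1 3 ∧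
      ((∀ x ∈ Finset.Icc 1 9,
          (χ x = c₁ ↔ x ∈ ({1, 4, 6, 9} : Finset ℕ)) ∧
          (χ x = c₂ ↔ x ∈ ({2, 3, 7, 8} : Finset ℕ)) ∧
          (χ x = c₃ ↔ x ∈ ({5} : Finset ℕ))) ∨
       (∀ x ∈ Finset.Icc 1 9,
          (χ x = c₁ ↔ x ∈ ({1, 3, 5, 7, 9} : Finset ℕ)) ∧
          (χ x = c₂ ↔ x ∈ ({2, 8} : Finset ℕ)) ∧
          (χ x = c₃ ↔ x ∈ ({4, 6} : Finset ℕ)))) := by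
  exact strong_three_color_unique_general (by simp) h.1 h.isGallaiSchur
end

section
/- For every integer r > 1, 5·WGS(r) = 9·GS(r), where GS(r) and WGS(r) denote the strong and weak Gallai-Schur numbers respectively. -/
/-- The strong Gallai–Schur number `GS r`: the least `n` such that no strong
Gallai–Schur `r`-coloring of `[1, m]` exists for any `m ≥ n`. -/
noncomputable def GS (r : ℕ) : ℕ :=
  sInf {n : ℕ | ∀ m, n ≤ m → ∀ χ : ℕ → ℕ, ¬ StrongGS m (Finset.Icc 1 r) χ}

/-!
Color the edge `{i, j}` of the complete graph on `{0, …, m}` by `χ |i - j|`: the absence of rainbow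
sums makes this a Gallai coloring, and the Gallai partition of a coloring with at least three
colors turns out to be a partition into residue classes. There is a modulus `d ≥ 2` such that at
most two colors occur on the nonmultiples of `d`, and there `χ x` depends only on `± x mod d`.
The modulus starts as the first number receiving a third color. Whenever a further number `N`
receives a color outside the first two, reflection at `N` shows that the pattern is also
`N`-periodic, and `d` is replaced by `gcd d N`.

A sum-free `χ` cannot reuse on multiples of `d` a color of a nonmultiple, so the pattern on
`[1, d - 1]` and the coloring `x ↦ χ (d * x)` of `[1, m / d]` use disjoint sets of colors, and
induction bounds `m`. The extremal patterns have modulus `5` with two colors and modulus `2` with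
one. In the weak problem the pattern still has to be strongly sum-free unless `m < 2 * d`, so only
the last two colors gain anything: they reach `8` instead of `4`, which is the factor `9 / 5`.
-/

namespace GallaiSchur

open Finset

section Predicates

variable {α : Type*} {m n d : ℕ} {χ : ℕ → α}

/-- `χ` has no rainbow solution of `a + b = c` in `[1, m]`. -/
def RainbowFree (m : ℕ) (χ : ℕ → α) : Prop :=
  ∀ a b, 0 < a → 0 < b → a + b ≤ m → χ a = χ b ∨ χ a = χ (a + b) ∨ χ b = χ (a + b)

/-- `χ` has no monochromatic solution of `a + b = c` in `[1, m]`. -/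
def SchurFree (m : ℕ) (χ : ℕ → α) : Prop :=
  ∀ a b, 0 < a → 0 < b → a + b ≤ m → ¬(χ a = χ b ∧ χ b = χ (a + b))

/-- `χ` has no monochromatic solution of `a + b = c` with `a ≠ b` in `[1, m]`. -/
def WeakSchurFree (m : ℕ) (χ : ℕ → α) : Prop :=
  ∀ a b, 0 < a → 0 < b → a ≠ b → a + b ≤ m → ¬(χ a = χ b ∧ χ b = χ (a + b))

/-- The set of colors that `χ` uses on `[1, m]`. -/
def colors [DecidableEq α] (m : ℕ) (χ : ℕ → α) : Finset α :=
  (Icc 1 m).image χ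

lemma RainbowFree.mono (h : RainbowFree m χ) (hn : n ≤ m) : RainbowFree n χ :=
  fun a b ha hb hab ↦ h a b ha hb (hab.trans hn)

lemma SchurFree.mono (h : SchurFree m χ) (hn : n ≤ m) : SchurFree n χ :=
  fun a b ha hb hab ↦ h a b ha hb (hab.trans hn)

lemma WeakSchurFree.mono (h : WeakSchurFree m χ) (hn : n ≤ m) : WeakSchurFree n χ :=
  fun a b ha hb hne hab ↦ h a b ha hb hne (hab.trans hn)

lemma mul_le_of_le_div {x : ℕ} (h : x ≤ m / d) : d * x ≤ m :=
  (Nat.mul_le_mul_left d h).trans (Nat.mul_div_le m d)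

lemma RainbowFree.dilate (h : RainbowFree m χ) (hd : 0 < d) :
    RainbowFree (m / d) fun x ↦ χ (d * x) := by
  intro a b ha hb hab
  have := h (d * a) (d * b) (by positivity) (by positivity)
    (by rw [← mul_add]; exact mul_le_of_le_div hab)
  rwa [← mul_add] at this

lemma SchurFree.dilate (h : SchurFree m χ) (hd : 0 < d) :
    SchurFree (m / d) fun x ↦ χ (d * x) := by
  intro a b ha hb hab
  have := h (d * a) (d * b) (by positivity) (by positivity)
    (by rw [← mul_add]; exact mul_le_of_le_div hab)
  rwa [← mul_add] at this

lemma WeakSchurFree.dilate (h : WeakSchurFree m χ) (hd : 0 < d) :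
    WeakSchurFree (m / d) fun x ↦ χ (d * x) := by
  intro a b ha hb hne hab
  have := h (d * a) (d * b) (by positivity) (by positivity)
    (fun heq ↦ hne (Nat.eq_of_mul_eq_mul_left hd heq))
    (by rw [← mul_add]; exact mul_le_of_le_div hab)
  rwa [← mul_add] at this

variable [DecidableEq α]

lemma mem_colors {c : α} : c ∈ colors m χ ↔ ∃ x, 0 < x ∧ x ≤ m ∧ χ x = c := by
  simp [colors, Nat.lt_iff_add_one_le, and_assoc]

lemma apply_mem_colors {x : ℕ} (hx : 0 < x) (hxm : x ≤ m) : χ x ∈ colors m χ :=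
  mem_colors.2 ⟨x, hx, hxm, rfl⟩

lemma colors_eq_empty_iff : colors m χ = ∅ ↔ m = 0 := by
  simp [colors]

lemma exists_first_notMem {P : Finset α} (hP : #P < #(colors m χ)) :
    ∃ k, 0 < k ∧ k ≤ m ∧ χ k ∉ P ∧ ∀ x, 0 < x → x < k → χ x ∈ P := by
  classical
  have hex : ∃ k, 0 < k ∧ k ≤ m ∧ χ k ∉ P := by
    obtain ⟨c, hc, hcP⟩ := exists_mem_notMem_of_card_lt_card hP
    obtain ⟨k, hk, hkm, rfl⟩ := mem_colors.1 hc
    exact ⟨k, hk, hkm, hcP⟩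
  obtain ⟨hk, hkm, hkP⟩ := Nat.find_spec hex
  refine ⟨Nat.find hex, hk, hkm, hkP, fun x hx hxk ↦ ?_⟩
  by_contra hxP
  exact Nat.find_min hex hxk ⟨hx, hxk.le.trans hkm, hxP⟩

lemma eq_of_card_colors_eq_one {x y : ℕ} (h : #(colors m χ) = 1) (hx : 0 < x) (hxm : x ≤ m)
    (hy : 0 < y) (hym : y ≤ m) : χ x = χ y :=
  card_le_one.1 h.le _ (apply_mem_colors hx hxm) _ (apply_mem_colors hy hym)

lemma exists_second_color (h : #(colors m χ) ≤ 2) :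
    ∃ B, ∀ x, 0 < x → x ≤ m → χ x = χ 1 ∨ χ x = B := by
  by_contra! hB
  obtain ⟨b, hb, hbm, hb1, -⟩ := hB (χ 1)
  obtain ⟨k, hk, hkm, hk1, hkb⟩ := hB (χ b)
  refine h.not_gt (two_lt_card.2 ⟨χ 1, ?_, χ b, ?_, χ k, ?_, hb1.symm, hk1.symm, hkb.symm⟩)
  exacts [apply_mem_colors one_pos (by omega), apply_mem_colors hb hbm, apply_mem_colors hk hkm]

end Predicates

section Reduction

variable {α : Type*} {m n d : ℕ} {χ : ℕ → α} {f : ℤ → α} {P : Finset α}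

/-- `χ` on `[1, n]` is a blow-up modulo `d`: the color of a nonmultiple `x` of `d` belongs to the
palette `P` and depends only on the class of `± x` modulo `d`. The dependence is encoded by an even
`d`-periodic `f` on `ℤ`, whose values at multiples of `d` are irrelevant. -/
structure IsReduction (P : Finset α) (n d : ℕ) (χ : ℕ → α) (f : ℤ → α) : Prop where
  even : f.Even
  periodic : Function.Periodic f d
  apply_eq : ∀ x : ℕ, 0 < x → x ≤ n → ¬ d ∣ x → χ x = f x
  mem : ∀ z : ℤ, ¬ (d : ℤ) ∣ z → f z ∈ P

lemma exists_periodic_gcd {d N : ℤ} (heven : f.Even) (hper : Function.Periodic f d)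
    (hN : ∀ z, ¬ d ∣ z → ¬ d ∣ z + N → f (z + N) = f z) :
    ∃ g : ℤ → α, g.Even ∧ Function.Periodic g (Int.gcd d N) ∧ ∀ z, ¬ d ∣ z → g z = f z := by
  classical
  have hmul (z t : ℤ) (hz : d ∣ z) : f (z + t) = f t := by
    obtain ⟨q, rfl⟩ := hz
    rw [add_comm, mul_comm]
    exact hper.int_mul q t
  -- With the value `f N` at multiples of `d`, evenness makes the pattern `N`-periodic everywhere.
  let g : ℤ → α := fun z ↦ if d ∣ z then f N else f z
  have hgd : Function.Periodic g d := fun z ↦ by simp [g, hper z]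
  have hgN : Function.Periodic g N := fun z ↦ by
    by_cases hz : d ∣ z <;> by_cases hzN : d ∣ z + N <;> simp only [g, hz, hzN, if_true, if_false]
    · exact hmul z N hz
    · calc f N = f (z + N + -z) := by congr 1; ring
        _ = f z := by rw [hmul _ _ hzN, heven]
    · exact hN z hz hzN
  refine ⟨g, fun z ↦ by simp [g, heven z], ?_, fun z hz ↦ if_neg hz⟩
  rw [Int.gcd_eq_gcd_ab, mul_comm d, mul_comm N]
  exact (hgd.int_mul _).add_period (hgN.int_mul _)

namespace IsReduction

lemma apply_mem (hf : IsReduction P n d χ f) {x : ℕ} (hx : 0 < x) (hxn : x ≤ n) (hdx : ¬ d ∣ x) :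
    χ x ∈ P := by
  rw [hf.apply_eq x hx hxn hdx]
  exact hf.mem x (mod_cast hdx)

lemma apply_add (hf : IsReduction P n d χ f) {x : ℕ} (hx : 0 < x) (hxn : x + d ≤ n)
    (hdx : ¬ d ∣ x) : χ (x + d) = χ x := by
  rw [hf.apply_eq x hx (by omega) hdx, hf.apply_eq (x + d) (by omega) hxn (by simpa using hdx)]
  exact_mod_cast hf.periodic x

lemma apply_mul_sub (hf : IsReduction P n d χ f) {x k : ℕ} (hx : 0 < x) (hxk : x < d * k)
    (hk : d * k ≤ n) (hdx : ¬ d ∣ x) : χ (d * k - x) = χ x := by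
  have hdk : ¬ d ∣ d * k - x := by rwa [Nat.dvd_sub_iff_right hxk.le (dvd_mul_right d k)]
  rw [hf.apply_eq x hx (by omega) hdx, hf.apply_eq _ (by omega) (by omega) hdk, ← hf.even x]
  convert hf.periodic.int_mul k (-x) using 2
  push_cast [hxk.le]
  ring

lemma apply_add_eq (hf : IsReduction P n d χ f) (h : RainbowFree (n + 1) χ) (hd : 0 < d)
    (hdn : d ≤ n) (hN : χ (n + 1) ∉ P) {z : ℤ} (hz : ¬ (d : ℤ) ∣ z)
    (hzN : ¬ (d : ℤ) ∣ z + (n + 1 : ℕ)) : f (z + (n + 1 : ℕ)) = f z := by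
  obtain ⟨j, q, hj, hjd, hjz⟩ : ∃ (j : ℕ) (q : ℤ), 0 < j ∧ j < d ∧ -z = j + q * d := by
    have hpos : 0 < -z % d := (Int.emod_pos_of_not_dvd (by simpa using hz)).resolve_left (by omega)
    have hlt : -z % d < d := Int.emod_lt_of_pos _ (by omega)
    refine ⟨(-z % d).toNat, -z / d, by omega, by omega, ?_⟩
    rw [Int.toNat_of_nonneg hpos.le, Int.emod_add_ediv_mul]
  have hfj : f z = f j := by
    rw [← hf.even z, hjz]
    exact hf.periodic.int_mul q j
  have hsub : ((n + 1 - j : ℕ) : ℤ) = z + (n + 1 : ℕ) + q * d := by omega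
  have hfNj : f (z + (n + 1 : ℕ)) = f (n + 1 - j : ℕ) := by
    rw [hsub]
    exact (hf.periodic.int_mul q _).symm
  have hdj : ¬ d ∣ j := Nat.not_dvd_of_pos_of_lt hj hjd
  have hdNj : ¬ d ∣ n + 1 - j := by
    rw [← Int.natCast_dvd_natCast, hsub]
    simpa using hzN
  rw [hfj, hfNj, ← hf.apply_eq j hj (by omega) hdj,
    ← hf.apply_eq _ (by omega) (by omega) hdNj]
  have htri := h j (n + 1 - j) hj (by omega) (by omega)
  rw [show j + (n + 1 - j) = n + 1 by omega] at htri
  rcases htri with heq | heq | heq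
  · exact heq.symm
  · exact absurd (heq ▸ hf.apply_mem hj (by omega) hdj) hN
  · exact absurd (heq ▸ hf.apply_mem (by omega) (by omega) hdNj) hN

lemma exists_gcd (hf : IsReduction P n d χ f) (h : RainbowFree (n + 1) χ) (hd : 0 < d)
    (hdn : d ≤ n) (hN : χ (n + 1) ∉ P) :
    ∃ g, IsReduction P (n + 1) (Nat.gcd d (n + 1)) χ g := by
  obtain ⟨g, hgeven, hgper, hgf⟩ := exists_periodic_gcd hf.even hf.periodic
    fun z ↦ hf.apply_add_eq h hd hdn hN
  rw [Int.gcd_natCast_natCast] at hgper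
  refine ⟨g, hgeven, hgper, fun x hx hxn hdx ↦ ?_, fun z hz ↦ ?_⟩
  · have hne : x ≠ n + 1 := by rintro rfl; exact hdx (Nat.gcd_dvd_right _ _)
    have hdx' : ¬ d ∣ x := fun hdvd ↦ hdx ((Nat.gcd_dvd_left _ _).trans hdvd)
    rw [hf.apply_eq x hx (by omega) hdx', hgf x (mod_cast hdx')]
  · have hdz : ¬ (d : ℤ) ∣ z :=
      fun hdvd ↦ hz ((Int.natCast_dvd_natCast.2 (Nat.gcd_dvd_left _ _)).trans hdvd)
    rw [hgf z hdz]
    exact hf.mem z hdz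

lemma apply_eq_of_coprime (hf : IsReduction P n d χ f) (h : RainbowFree (n + 1) χ) (hd : 0 < d)
    (hdn : d ≤ n) (hN : χ (n + 1) ∉ P) (hcop : d.Coprime (n + 1)) {x y : ℕ} (hx : 0 < x)
    (hxn : x ≤ n) (hdx : ¬ d ∣ x) (hy : 0 < y) (hyn : y ≤ n) (hdy : ¬ d ∣ y) : χ x = χ y := by
  obtain ⟨g, -, hgper, hgf⟩ := exists_periodic_gcd hf.even hf.periodic
    fun z ↦ hf.apply_add_eq h hd hdn hN
  rw [Int.gcd_natCast_natCast, hcop, Nat.cast_one] at hgper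
  have hconst (z : ℤ) : g z = g 0 := by simpa using hgper.int_mul_eq z
  rw [hf.apply_eq x hx hxn hdx, hf.apply_eq y hy hyn hdy, ← hgf x (mod_cast hdx),
    ← hgf y (mod_cast hdy), hconst x, hconst y]

lemma gcd_ne_one (hf : IsReduction P n d χ f) (h : RainbowFree (n + 1) χ) (hd : 2 ≤ d)
    (hdn : d ≤ n) (hN : χ (n + 1) ∉ P) {b : ℕ} (hb : 0 < b) (hbn : b ≤ n) (hbP : χ b ∈ P)
    (hb1 : χ b ≠ χ 1) : Nat.gcd d (n + 1) ≠ 1 := by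
  intro hcop
  have hconst {x : ℕ} (hx : 0 < x) (hxn : x ≤ n) (hdx : ¬ d ∣ x) : χ x = χ 1 :=
    hf.apply_eq_of_coprime h (by omega) hdn hN hcop hx hxn hdx one_pos (by omega)
      (Nat.not_dvd_of_pos_of_lt one_pos hd)
  have hdb : d ∣ b := by
    by_contra hdb
    exact hb1 (hconst hb hbn hdb)
  have hdNb : ¬ d ∣ n + 1 - b := fun hdvd ↦ by
    have hdN : d ∣ n + 1 := (Nat.dvd_sub_iff_left (by omega) hdb).1 hdvd
    have := Nat.Coprime.eq_one_of_dvd hcop hdN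
    omega
  have htri := h b (n + 1 - b) hb (by omega) (by omega)
  rw [show b + (n + 1 - b) = n + 1 by omega] at htri
  rcases htri with heq | heq | heq
  · exact hb1 (heq.trans (hconst (by omega) (by omega) hdNb))
  · exact hN (heq ▸ hbP)
  · exact hN (heq ▸ hf.apply_mem (by omega) (by omega) hdNb)

lemma extend (hf : IsReduction P n d χ f) (h : RainbowFree (n + 1) χ) {k : ℕ} (hk : 0 < k)
    (hkn : k ≤ n) (hkP : χ k ∉ P) (hN : χ (n + 1) ∈ P) : IsReduction P (n + 1) d χ f := by
  refine ⟨hf.even, hf.periodic, fun x hx hxn hdx ↦ ?_, hf.mem⟩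
  obtain hxn | rfl := Nat.le_succ_iff.1 hxn
  · exact hf.apply_eq x hx hxn hdx
  have hdk : d ∣ k := by
    by_contra hdk
    exact hkP (hf.apply_mem hk hkn hdk)
  have hdNk : ¬ d ∣ n + 1 - k := by rwa [Nat.dvd_sub_iff_left (by omega) hdk]
  have heq : χ (n + 1 - k) = χ (n + 1) := by
    have htri := h (n + 1 - k) k (by omega) hk (by omega)
    rw [Nat.sub_add_cancel (by omega)] at htri
    rcases htri with heq | heq | heq
    · exact absurd (heq ▸ hf.apply_mem (by omega) (by omega) hdNk) hkP
    · exact heq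
    · exact absurd (heq ▸ hN) hkP
  obtain ⟨q, rfl⟩ := hdk
  rw [← heq, hf.apply_eq _ (by omega) (by omega) hdNk]
  rw [Nat.cast_sub (by omega), Nat.cast_mul, mul_comm]
  exact hf.periodic.sub_int_mul_eq q

end IsReduction

/-- The reflection `x ↦ k - x` preserves `χ` because `k` has a color outside the palette. -/
lemma RainbowFree.isReduction_self {k : ℕ} (h : RainbowFree k χ) (hk : 0 < k) (hkP : χ k ∉ P)
    (hP : ∀ x, 0 < x → x < k → χ x ∈ P) :
    IsReduction P k k χ fun z ↦ χ (z % k).toNat := by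
  have hrange {z : ℤ} (hz : ¬ (k : ℤ) ∣ z) : 0 < (z % k).toNat ∧ (z % k).toNat < k := by
    have hpos : 0 < z % k := (Int.emod_pos_of_not_dvd hz).resolve_left (by omega)
    have hlt : z % k < k := Int.emod_lt_of_pos _ (by omega)
    omega
  refine ⟨fun z ↦ ?_, fun z ↦ by simp, fun x _ hxk hkx ↦ ?_, fun z hz ↦ ?_⟩
  · by_cases hz : (k : ℤ) ∣ z
    · simp only [Int.emod_eq_zero_of_dvd hz, Int.emod_eq_zero_of_dvd (dvd_neg.2 hz)]
    obtain ⟨hpos, hlt⟩ := hrange hz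
    have hneg : (-z % k).toNat = k - (z % k).toNat := by
      rw [Int.neg_emod, if_neg hz]
      omega
    have htri := h (z % k).toNat (k - (z % k).toNat) hpos (by omega) (by omega)
    rw [Nat.add_sub_cancel' hlt.le] at htri
    simp only [hneg]
    rcases htri with heq | heq | heq
    · exact heq.symm
    · exact absurd (heq ▸ hP _ hpos hlt) hkP
    · exact absurd (heq ▸ hP _ (by omega) (by omega)) hkP
  · have hne : x ≠ k := by rintro rfl; exact hkx dvd_rfl
    rw [← Int.natCast_mod, Int.toNat_natCast, Nat.mod_eq_of_lt (by omega)]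
  · exact hP _ (hrange hz).1 (hrange hz).2

lemma RainbowFree.exists_isReduction_of_first {b k : ℕ} (h : RainbowFree m χ) (hb : 0 < b)
    (hbk : b < k) (hb1 : χ b ≠ χ 1) (hkP : χ k ∉ P) (hP : ∀ x, 0 < x → x < k → χ x ∈ P)
    (hkm : k ≤ m) : ∃ d f, 2 ≤ d ∧ d ≤ m ∧ IsReduction P m d χ f := by
  induction m, hkm using Nat.le_induction with
  | base => exact ⟨k, _, by omega, le_rfl, h.isReduction_self (by omega) hkP hP⟩
  | succ n hkn ih =>
    obtain ⟨d, f, hd, hdn, hf⟩ := ih (h.mono n.le_succ)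
    by_cases hN : χ (n + 1) ∈ P
    · exact ⟨d, f, hd, by omega, hf.extend h (by omega) hkn hkP hN⟩
    obtain ⟨g, hg⟩ := hf.exists_gcd h (by omega) hdn hN
    have hne := hf.gcd_ne_one h hd hdn hN hb (by omega) (hP b hb hbk) hb1
    have hpos : 0 < Nat.gcd d (n + 1) := Nat.gcd_pos_of_pos_left _ (by omega)
    exact ⟨_, g, by omega, Nat.gcd_le_right _ n.succ_pos, hg⟩

theorem RainbowFree.exists_isReduction [DecidableEq α] (h : RainbowFree m χ)
    (hc : 2 < #(colors m χ)) :
    ∃ P : Finset α, #P ≤ 2 ∧ ∃ d f, 2 ≤ d ∧ d ≤ m ∧ IsReduction P m d χ f := by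
  obtain ⟨b, hb, -, hb1, hbmin⟩ :=
    exists_first_notMem (P := {χ 1}) (by simpa using one_lt_two.trans hc)
  obtain ⟨k, hk, hkm, hkP, hkmin⟩ :=
    exists_first_notMem (P := {χ 1, χ b}) (card_le_two.trans_lt hc)
  simp only [mem_singleton, mem_insert, not_or] at hb1 hbmin hkP
  have hbk : b < k := by
    by_contra! hkb
    obtain rfl | hkb := hkb.eq_or_lt
    · exact hkP.2 rfl
    · exact hkP.1 (hbmin k hk hkb)
  exact ⟨{χ 1, χ b}, card_le_two,
    h.exists_isReduction_of_first hb hbk hb1 (by simpa using hkP) hkmin hkm⟩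

namespace IsReduction

lemma schurFree_of_weakSchurFree (hf : IsReduction P m d χ f) (hs : WeakSchurFree m χ)
    (hdm : 2 * d ≤ m) : SchurFree (d - 1) χ := by
  rintro a b ha hb hab ⟨hχab, hχ⟩
  by_cases hne : a = b
  · subst hne
    have hadd := hf.apply_add ha (by omega) (Nat.not_dvd_of_pos_of_lt ha (by omega))
    have hadd₂ := hf.apply_add (x := a + a) (by omega) (by omega)
      (Nat.not_dvd_of_pos_of_lt (by omega) (by omega))
    exact hs a (a + d) ha (by omega) (by omega) (by omega)
      ⟨hadd.symm, by rw [hadd, ← add_assoc, hadd₂, ← hχ]⟩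
  · exact hs a b ha hb hne (by omega) ⟨hχab, hχ⟩

variable [DecidableEq α]

lemma card_colors_le (hf : IsReduction P m d χ f) (hdm : d ≤ m + 1) :
    #(colors (d - 1) χ) ≤ #P := by
  refine card_le_card fun c hc ↦ ?_
  obtain ⟨x, hx, hxd, rfl⟩ := mem_colors.1 hc
  exact hf.apply_mem hx (by omega) (Nat.not_dvd_of_pos_of_lt hx (by omega))

lemma colors_eq_union (hf : IsReduction P m d χ f) (hd : 0 < d) (hdm : d ≤ m + 1) :
    colors m χ = colors (d - 1) χ ∪ colors (m / d) fun x ↦ χ (d * x) := by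
  ext c
  simp only [mem_union, mem_colors]
  constructor
  · rintro ⟨x, hx, hxm, rfl⟩
    by_cases hdx : d ∣ x
    · obtain ⟨y, rfl⟩ := hdx
      exact .inr ⟨y, Nat.pos_of_mul_pos_left hx,
        (Nat.le_div_iff_mul_le hd).2 (by rwa [mul_comm]), rfl⟩
    · have hlt : x % d < d := Nat.mod_lt x hd
      have hpos : 0 < x % d := Nat.emod_pos_of_not_dvd hdx
      refine .inl ⟨x % d, hpos, by omega, ?_⟩
      rw [hf.apply_eq x hx hxm hdx, hf.apply_eq (x % d) hpos (by omega)
        (Nat.not_dvd_of_pos_of_lt hpos hlt), Int.natCast_mod, Int.emod_def, mul_comm]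
      exact hf.periodic.sub_int_mul_eq _
  · rintro (⟨x, hx, hxd, rfl⟩ | ⟨x, hx, hxm, rfl⟩)
    · exact ⟨x, hx, by omega, rfl⟩
    · exact ⟨d * x, by positivity, mul_le_of_le_div hxm, rfl⟩

lemma disjoint_colors_of_schurFree (hf : IsReduction P m d χ f) (hs : SchurFree m χ) :
    Disjoint (colors (d - 1) χ) (colors (m / d) fun x ↦ χ (d * x)) := by
  rw [disjoint_left]
  intro c hc hc'
  obtain ⟨x, hx, hxd, rfl⟩ := mem_colors.1 hc
  obtain ⟨k, hk, hkm, hkx⟩ := mem_colors.1 hc'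
  have hxk : x < d * k := by have := Nat.le_mul_of_pos_right d hk; omega
  have hsub := hf.apply_mul_sub hx hxk (mul_le_of_le_div hkm)
    (Nat.not_dvd_of_pos_of_lt hx (by omega))
  refine hs x (d * k - x) hx (by omega) (by have := mul_le_of_le_div hkm; omega) ⟨hsub.symm, ?_⟩
  rw [Nat.add_sub_cancel' hxk.le, hsub, hkx]

lemma disjoint_colors_of_weakSchurFree (hf : IsReduction P m d χ f) (hs : WeakSchurFree m χ)
    (hdm : 2 * d ≤ m) :
    Disjoint (colors (d - 1) χ) (colors (m / d) fun x ↦ χ (d * x)) := by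
  rw [disjoint_left]
  intro c hc hc'
  obtain ⟨x, hx, hxd, rfl⟩ := mem_colors.1 hc
  obtain ⟨k, hk, hkm, hkx⟩ := mem_colors.1 hc'
  have hdx : ¬ d ∣ x := Nat.not_dvd_of_pos_of_lt hx (by omega)
  have hdk := Nat.le_mul_of_pos_right d hk
  have hkm := mul_le_of_le_div hkm
  by_cases hne : x = d * k - x
  · -- The sum `x + (d * k - x)` is not admissible here, and the sum of `x` and `d` replaces it.
    obtain rfl : k = 1 := by
      by_contra hk1
      have := Nat.mul_le_mul_left d (show 2 ≤ k by omega)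
      omega
    rw [mul_one] at hkx
    have hadd := hf.apply_add hx (by omega) hdx
    exact hs x d hx (by omega) (by omega) (by omega) ⟨hkx.symm, by rw [hadd, hkx]⟩
  · have hsub := hf.apply_mul_sub hx (by omega) hkm hdx
    refine hs x (d * k - x) hx (by omega) hne (by omega) ⟨hsub.symm, ?_⟩
    rw [Nat.add_sub_cancel' (by omega), hsub, hkx]

end IsReduction

end Reduction

section UpperBounds

/-- The value of the strong Gallai–Schur number: `5 ^ (r / 2)` for even `r` and
`2 * 5 ^ ((r - 1) / 2)` for odd `r`. -/
def strongBound : ℕ → ℕ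
  | 0 => 1
  | 1 => 2
  | r + 2 => 5 * strongBound r

/-- The value of the weak Gallai–Schur number. -/
def weakBound : ℕ → ℕ
  | 0 => 1
  | 1 => 3
  | r + 2 => 9 * strongBound r

lemma two_mul_strongBound_le (r : ℕ) : 2 * strongBound r ≤ strongBound (r + 1) := by
  induction r using strongBound.induct with
  | case1 => simp [strongBound]
  | case2 => simp [strongBound]
  | case3 r ih => simp only [strongBound] at ih ⊢; omega

lemma strongBound_mul_strongBound_le {c : ℕ} (hc : c ≤ 2) (e : ℕ) :
    strongBound c * strongBound e ≤ strongBound (c + e) := by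
  rw [add_comm]
  interval_cases c
  · simp [strongBound]
  · exact two_mul_strongBound_le e
  · simp [strongBound]

lemma strongBound_mul_weakBound_le {c e : ℕ} (hc : c ≤ 2) (he : e ≠ 0) :
    strongBound c * weakBound e ≤ weakBound (c + e) := by
  rw [add_comm]
  match e with
  | 1 => interval_cases c <;> simp [strongBound, weakBound]
  | e + 2 =>
    have h := strongBound_mul_strongBound_le hc e
    rw [add_right_comm, weakBound, weakBound, add_comm e]
    linarith

variable {α : Type*} [DecidableEq α] {m : ℕ} {χ : ℕ → α}

lemma SchurFree.le_four (hs : SchurFree m χ) (hc : #(colors m χ) ≤ 2) : m ≤ 4 := by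
  by_contra! hm
  obtain ⟨B, hB⟩ := exists_second_color hc
  have h₂ : χ 2 = B := by grind [hs 1 1, hB 2]
  have h₄ : χ 4 = χ 1 := by grind [hs 2 2, hB 4]
  have h₃ : χ 3 = B := by grind [hs 1 3, hB 3]
  have h₅ : χ 5 = B := by grind [hs 1 4, hB 5]
  exact hs 2 3 two_pos three_pos hm ⟨by rw [h₂, h₃], by rw [h₃, h₅]⟩

lemma WeakSchurFree.le_eight (hs : WeakSchurFree m χ) (hc : #(colors m χ) ≤ 2) : m ≤ 8 := by
  by_contra! hm
  obtain ⟨B, hB⟩ := exists_second_color hc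
  have hsum {a b : ℕ} (ha : 0 < a) (hab : a < b) (h : a + b ≤ 9) :
      ¬(χ a = χ b ∧ χ b = χ (a + b)) := hs a b ha (by omega) hab.ne (by omega)
  have hcolor {x : ℕ} (hx : 0 < x) (hx9 : x ≤ 9) : χ x = χ 1 ∨ χ x = B := hB x hx (by omega)
  by_cases h₂ : χ 2 = χ 1
  · have h₃ : χ 3 = B := by grind [@hsum 1 2, @hcolor 3]
    by_cases h₄ : χ 4 = χ 1
    · have h₅ : χ 5 = B := by grind [@hsum 1 4, @hcolor 5]
      have h₆ : χ 6 = B := by grind [@hsum 2 4, @hcolor 6]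
      have h₈ : χ 8 = χ 1 := by grind [@hsum 3 5, @hcolor 8]
      have h₉ : χ 9 = χ 1 := by grind [@hsum 3 6, @hcolor 9]
      exact hsum (a := 1) (b := 8) (by omega) (by omega) le_rfl ⟨h₈.symm, by rw [h₈, h₉]⟩
    · have h₇ : χ 7 = χ 1 := by grind [@hsum 3 4, @hcolor 7, @hcolor 4]
      have h₅ : χ 5 = B := by grind [@hsum 2 5, @hcolor 5]
      have h₉ : χ 9 = χ 1 := by grind [@hsum 4 5, @hcolor 9, @hcolor 4]
      exact hsum (a := 2) (b := 7) (by omega) (by omega) le_rfl ⟨by rw [h₂, h₇], by rw [h₇, h₉]⟩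
  · have h₂ : χ 2 = B := (hcolor two_pos (by omega)).resolve_left h₂
    by_cases h₃ : χ 3 = χ 1
    · have h₄ : χ 4 = B := by grind [@hsum 1 3, @hcolor 4]
      have h₆ : χ 6 = χ 1 := by grind [@hsum 2 4, @hcolor 6]
      have h₉ : χ 9 = B := by grind [@hsum 3 6, @hcolor 9]
      have h₇ : χ 7 = B := by grind [@hsum 1 6, @hcolor 7]
      exact hsum (a := 2) (b := 7) (by omega) (by omega) le_rfl ⟨by rw [h₂, h₇], by rw [h₇, h₉]⟩
    · have h₅ : χ 5 = χ 1 := by grind [@hsum 2 3, @hcolor 5, @hcolor 3]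
      have h₆ : χ 6 = B := by grind [@hsum 1 5, @hcolor 6]
      have h₄ : χ 4 = B := by grind [@hsum 1 4, @hcolor 4]
      exact hsum (a := 2) (b := 4) (by omega) (by omega) (by omega)
        ⟨by rw [h₂, h₄], by rw [h₄, h₆]⟩

lemma SchurFree.succ_le_strongBound_of_card_le_two (hs : SchurFree m χ) (hc : #(colors m χ) ≤ 2) :
    m + 1 ≤ strongBound #(colors m χ) := by
  have hm := hs.le_four hc
  interval_cases hcard : #(colors m χ)
  · simp [strongBound, colors_eq_empty_iff.1 (card_eq_zero.1 hcard)]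
  · by_contra! hm₂
    simp only [strongBound] at hm₂
    exact hs 1 1 one_pos one_pos (by omega)
      ⟨rfl, eq_of_card_colors_eq_one hcard one_pos (by omega) two_pos (by omega)⟩
  · simp only [strongBound]; omega

lemma WeakSchurFree.succ_le_weakBound_of_card_le_two (hs : WeakSchurFree m χ)
    (hc : #(colors m χ) ≤ 2) : m + 1 ≤ weakBound #(colors m χ) := by
  have hm := hs.le_eight hc
  interval_cases hcard : #(colors m χ)
  · simp [weakBound, colors_eq_empty_iff.1 (card_eq_zero.1 hcard)]
  · by_contra! hm₃
    simp only [weakBound] at hm₃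
    exact hs 1 2 one_pos two_pos (by omega) (by omega)
      ⟨eq_of_card_colors_eq_one hcard one_pos (by omega) two_pos (by omega),
        eq_of_card_colors_eq_one hcard two_pos (by omega) three_pos (by omega)⟩
  · simp only [weakBound, strongBound]; omega

theorem SchurFree.succ_le_strongBound (hs : SchurFree m χ) (hr : RainbowFree m χ) :
    m + 1 ≤ strongBound #(colors m χ) := by
  induction m using Nat.strong_induction_on generalizing χ with
  | _ m ih =>
  obtain hc | hc := le_or_gt #(colors m χ) 2
  · exact hs.succ_le_strongBound_of_card_le_two hc
  obtain ⟨P, hP, d, f, hd, hdm, hf⟩ := hr.exists_isReduction hc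
  have hd₀ : 0 < d := by omega
  have hc₂ : #(colors (d - 1) χ) ≤ 2 := (hf.card_colors_le (by omega)).trans hP
  have hpattern := (hs.mono (show d - 1 ≤ m by omega)).succ_le_strongBound_of_card_le_two hc₂
  have hquot := ih (m / d) (Nat.div_lt_self (by omega) hd) (hs.dilate hd₀) (hr.dilate hd₀)
  rw [hf.colors_eq_union hd₀ (by omega),
    card_union_of_disjoint (hf.disjoint_colors_of_schurFree hs)]
  calc m + 1 ≤ d * (m / d + 1) := Nat.lt_mul_div_succ m hd₀
    _ ≤ _ := Nat.mul_le_mul (by omega) hquot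
    _ ≤ _ := strongBound_mul_strongBound_le hc₂ _

theorem WeakSchurFree.succ_le_weakBound (hs : WeakSchurFree m χ) (hr : RainbowFree m χ) :
    m + 1 ≤ weakBound #(colors m χ) := by
  induction m using Nat.strong_induction_on generalizing χ with
  | _ m ih =>
  obtain hc | hc := le_or_gt #(colors m χ) 2
  · exact hs.succ_le_weakBound_of_card_le_two hc
  obtain ⟨P, hP, d, f, hd, hdm, hf⟩ := hr.exists_isReduction hc
  have hd₀ : 0 < d := by omega
  have hc₂ : #(colors (d - 1) χ) ≤ 2 := (hf.card_colors_le (by omega)).trans hP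
  have hunion := hf.colors_eq_union hd₀ (by omega)
  have hlt : m + 1 ≤ d * (m / d + 1) := Nat.lt_mul_div_succ m hd₀
  obtain hdm₂ | hdm₂ := le_or_gt (2 * d) m
  · have hpattern :=
      (hf.schurFree_of_weakSchurFree hs hdm₂).succ_le_strongBound_of_card_le_two hc₂
    have hquot := ih (m / d) (Nat.div_lt_self (by omega) hd) (hs.dilate hd₀) (hr.dilate hd₀)
    have hne : #(colors (m / d) fun x ↦ χ (d * x)) ≠ 0 := by
      rw [Ne, card_eq_zero, colors_eq_empty_iff]
      exact (Nat.div_pos hdm hd₀).ne'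
    rw [hunion, card_union_of_disjoint (hf.disjoint_colors_of_weakSchurFree hs hdm₂)]
    calc m + 1 ≤ d * (m / d + 1) := hlt
      _ ≤ _ := Nat.mul_le_mul (by omega) hquot
      _ ≤ _ := strongBound_mul_weakBound_le hc₂ hne
  · have hq : m / d = 1 := Nat.div_eq_of_lt_le (by omega) (by omega)
    have hquot : #(colors (m / d) fun x ↦ χ (d * x)) ≤ 1 := by
      rw [hq]; exact card_image_le.trans (by simp)
    have hcard : #(colors m χ) = 3 := by
      have := card_union_le (colors (d - 1) χ) (colors (m / d) fun x ↦ χ (d * x))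
      rw [← hunion] at this
      omega
    have hpattern := (hs.mono (show d - 1 ≤ m by omega)).le_eight hc₂
    simp only [hcard, weakBound, strongBound]
    omega

end UpperBounds

section Blowups

variable {m d r s : ℕ} {β : ZMod d → ℕ} {χ : ℕ → ℕ}

/-- `β` is an even coloring of the nonzero residues modulo `d` by the colors `1, …, s` without
monochromatic or rainbow sums; its value at `0` is irrelevant. -/
structure IsPattern (d s : ℕ) (β : ZMod d → ℕ) : Prop where
  even : ∀ z, β (-z) = β z
  mem : ∀ z, z ≠ 0 → β z ∈ Icc 1 s
  exists_eq : ∀ i ∈ Icc 1 s, ∃ z, z ≠ 0 ∧ β z = i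
  schur : ∀ a b, a ≠ 0 → b ≠ 0 → a + b ≠ 0 → ¬(β a = β b ∧ β b = β (a + b))
  rainbow : ∀ a b, a ≠ 0 → b ≠ 0 → a + b ≠ 0 → β a = β b ∨ β a = β (a + b) ∨ β b = β (a + b)

/-- The blow-up of a coloring `χ` with colors `1, …, r` by a pattern `β` modulo `d`: multiples of
`d` are colored by `χ`, nonmultiples by `β` with its colors shifted by `r`. -/
def blowup (d r : ℕ) (β : ZMod d → ℕ) (χ : ℕ → ℕ) (x : ℕ) : ℕ :=
  if d ∣ x then χ (x / d) else r + β x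

lemma le_of_mul_le {x : ℕ} (hd : 0 < d) (h : d * x ≤ d * m + (d - 1)) : x ≤ m := by
  by_contra! hx
  have := Nat.mul_le_mul_left d (Nat.succ_le_of_lt hx)
  rw [Nat.mul_succ] at this
  omega

lemma blowup_mul (hd : 0 < d) (x : ℕ) : blowup d r β χ (d * x) = χ x := by
  simp [blowup, hd]

lemma blowup_of_not_dvd {x : ℕ} (hx : ¬ d ∣ x) : blowup d r β χ x = r + β x :=
  if_neg hx

namespace IsPattern

lemma lt_blowup (hβ : IsPattern d s β) {x : ℕ} (hx : ¬ d ∣ x) : r < blowup d r β χ x := by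
  have := (mem_Icc.1 (hβ.mem x (by rwa [Ne, ZMod.natCast_eq_zero_iff]))).1
  rw [blowup_of_not_dvd hx]
  omega

lemma isReduction_blowup (hβ : IsPattern d s β) (n : ℕ) :
    IsReduction (Icc (r + 1) (r + s)) n d (blowup d r β χ) fun z ↦ r + β z where
  even z := by simp [hβ.even]
  periodic z := by simp
  apply_eq x _ _ hx := by simp [blowup_of_not_dvd hx]
  mem z hz := by
    have := mem_Icc.1 (hβ.mem z (by rwa [Ne, ZMod.intCast_zmod_eq_zero_iff_dvd]))
    rw [mem_Icc]
    omega

lemma colors_blowup (hβ : IsPattern d s β) (hd : 0 < d) (hχ : colors m χ = Icc 1 r) :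
    colors (d * m + (d - 1)) (blowup d r β χ) = Icc 1 (r + s) := by
  have hdiv : (d * m + (d - 1)) / d = m := by
    rw [Nat.mul_add_div hd, Nat.div_eq_of_lt (by omega), add_zero]
  have hpattern : colors (d - 1) (blowup d r β χ) = Icc (r + 1) (r + s) := by
    have : NeZero d := ⟨hd.ne'⟩
    ext i
    rw [mem_colors]
    constructor
    · rintro ⟨x, hx, hxd, rfl⟩
      exact (hβ.isReduction_blowup x).apply_mem hx le_rfl
        (Nat.not_dvd_of_pos_of_lt hx (by omega))
    · intro hi
      rw [mem_Icc] at hi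
      obtain ⟨z, hz, hzi⟩ := hβ.exists_eq (i - r) (by rw [mem_Icc]; omega)
      have hpos : 0 < z.val := ZMod.val_pos.2 hz
      have hlt : z.val < d := z.val_lt
      refine ⟨z.val, hpos, by omega, ?_⟩
      rw [blowup_of_not_dvd (Nat.not_dvd_of_pos_of_lt hpos hlt), ZMod.natCast_zmod_val, hzi]
      omega
  rw [(hβ.isReduction_blowup _).colors_eq_union hd (by omega), hdiv, hpattern]
  simp only [blowup_mul hd, hχ]
  ext i
  simp only [mem_union, mem_Icc]
  omega

lemma rainbowFree_blowup (hβ : IsPattern d s β) (hd : 0 < d) (hχ : RainbowFree m χ) :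
    RainbowFree (d * m + (d - 1)) (blowup d r β χ) := by
  intro a b ha hb hab
  by_cases hda : d ∣ a <;> by_cases hdb : d ∣ b
  · obtain ⟨a, rfl⟩ := hda
    obtain ⟨b, rfl⟩ := hdb
    rw [← mul_add, blowup_mul hd, blowup_mul hd, blowup_mul hd]
    refine hχ a b (Nat.pos_of_mul_pos_left ha) (Nat.pos_of_mul_pos_left hb) ?_
    exact le_of_mul_le hd (by rwa [mul_add])
  · have hdab : ¬ d ∣ a + b := by rwa [Nat.dvd_add_right hda]
    simp [blowup_of_not_dvd hdb, blowup_of_not_dvd hdab, (ZMod.natCast_eq_zero_iff a d).2 hda]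
  · have hdab : ¬ d ∣ a + b := by rwa [Nat.dvd_add_left hdb]
    simp [blowup_of_not_dvd hda, blowup_of_not_dvd hdab, (ZMod.natCast_eq_zero_iff b d).2 hdb]
  · rw [blowup_of_not_dvd hda, blowup_of_not_dvd hdb]
    by_cases hdab : d ∣ a + b
    · have hneg : (a : ZMod d) = -b := by
        rw [eq_neg_iff_add_eq_zero]
        exact_mod_cast (ZMod.natCast_eq_zero_iff _ d).2 hdab
      rw [hneg, hβ.even]
      exact .inl rfl
    · rw [blowup_of_not_dvd hdab]
      rw [← ZMod.natCast_eq_zero_iff] at hda hdb hdab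
      push_cast at hdab ⊢
      simpa using hβ.rainbow a b hda hdb hdab

lemma dvd_of_blowup_eq (hβ : IsPattern d s β) (hd : 0 < d) (hχ : colors m χ = Icc 1 r) {a b : ℕ}
    (hab : a + b ≤ d * m + (d - 1)) (ha : 0 < a) (hb : 0 < b)
    (hmono : blowup d r β χ a = blowup d r β χ b ∧
      blowup d r β χ b = blowup d r β χ (a + b)) : d ∣ a ∧ d ∣ b := by
  have hle {x : ℕ} (hx : 0 < x) (hxm : x ≤ d * m + (d - 1)) (hdx : d ∣ x) :
      blowup d r β χ x ≤ r := by
    obtain ⟨x, rfl⟩ := hdx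
    have hmem := apply_mem_colors (χ := χ) (Nat.pos_of_mul_pos_left hx) (le_of_mul_le hd hxm)
    rw [hχ, mem_Icc] at hmem
    rw [blowup_mul hd]
    exact hmem.2
  obtain ⟨hab_eq, hsum⟩ := hmono
  by_cases hda : d ∣ a
  · refine ⟨hda, ?_⟩
    by_contra hdb
    have hlt : r < blowup d r β χ b := hβ.lt_blowup hdb
    have := hle ha (by omega) hda
    omega
  exfalso
  have hlt : r < blowup d r β χ a := hβ.lt_blowup hda
  have hdb : ¬ d ∣ b := fun hdb ↦ by have := hle hb (by omega) hdb; omega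
  have hdab : ¬ d ∣ a + b := fun hdab ↦ by have := hle (by omega) hab hdab; omega
  rw [blowup_of_not_dvd hda, blowup_of_not_dvd hdb, Nat.add_left_cancel_iff] at hab_eq
  rw [blowup_of_not_dvd hdb, blowup_of_not_dvd hdab, Nat.add_left_cancel_iff, Nat.cast_add] at hsum
  rw [← ZMod.natCast_eq_zero_iff] at hda hdb hdab
  exact hβ.schur a b hda hdb (by rwa [← Nat.cast_add]) ⟨hab_eq, hsum⟩

lemma schurFree_blowup (hβ : IsPattern d s β) (hd : 0 < d) (hχ : colors m χ = Icc 1 r)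
    (hs : SchurFree m χ) : SchurFree (d * m + (d - 1)) (blowup d r β χ) := by
  intro a b ha hb hab hmono
  obtain ⟨⟨a, rfl⟩, b, rfl⟩ := hβ.dvd_of_blowup_eq hd hχ hab ha hb hmono
  rw [← mul_add] at hab hmono
  rw [blowup_mul hd, blowup_mul hd, blowup_mul hd] at hmono
  exact hs a b (Nat.pos_of_mul_pos_left ha) (Nat.pos_of_mul_pos_left hb) (le_of_mul_le hd hab)
    hmono

lemma weakSchurFree_blowup (hβ : IsPattern d s β) (hd : 0 < d) (hχ : colors m χ = Icc 1 r)
    (hs : WeakSchurFree m χ) : WeakSchurFree (d * m + (d - 1)) (blowup d r β χ) := by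
  intro a b ha hb hne hab hmono
  obtain ⟨⟨a, rfl⟩, b, rfl⟩ := hβ.dvd_of_blowup_eq hd hχ hab ha hb hmono
  rw [← mul_add] at hab hmono
  rw [blowup_mul hd, blowup_mul hd, blowup_mul hd] at hmono
  exact hs a b (Nat.pos_of_mul_pos_left ha) (Nat.pos_of_mul_pos_left hb)
    (fun heq ↦ hne (by rw [heq])) (le_of_mul_le hd hab) hmono

end IsPattern

lemma isPattern_two : IsPattern 2 1 fun _ ↦ 1 := by
  constructor <;> decide

lemma isPattern_five : IsPattern 5 2 fun z ↦ if z = 1 ∨ z = 4 then 1 else 2 := by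
  constructor <;> decide

end Blowups

section GallaiSchurNumbers

variable {m r d s : ℕ} {C : Finset ℕ} {β : ZMod d → ℕ} {χ : ℕ → ℕ}

lemma colors_eq_iff :
    colors m χ = C ↔ (∀ x ∈ Icc 1 m, χ x ∈ C) ∧ ∀ i ∈ C, ∃ x ∈ Icc 1 m, χ x = i := by
  simp only [colors, Subset.antisymm_iff, image_subset_iff, subset_iff (s₁ := C), mem_image]

lemma rainbowFree_iff :
    RainbowFree m χ ↔ ∀ a ∈ Icc 1 m, ∀ b ∈ Icc 1 m, ∀ c ∈ Icc 1 m,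
      a + b = c → ¬(χ a ≠ χ b ∧ χ a ≠ χ c ∧ χ b ≠ χ c) := by
  simp only [mem_Icc]
  constructor
  · rintro h a ha b hb c hc rfl
    have := h a b ha.1 hb.1 hc.2
    tauto
  · intro h a b ha hb hab
    have := h a ⟨ha, by omega⟩ b ⟨hb, by omega⟩ (a + b) ⟨by omega, hab⟩ rfl
    tauto

lemma strongGS_iff : StrongGS m C χ ↔ colors m χ = C ∧ SchurFree m χ ∧ RainbowFree m χ := by
  have hschur : SchurFree m χ ↔ ∀ a ∈ Icc 1 m, ∀ b ∈ Icc 1 m, ∀ c ∈ Icc 1 m,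
      a + b = c → ¬(χ a = χ b ∧ χ b = χ c) := by
    simp only [mem_Icc]
    constructor
    · rintro h a ha b hb c hc rfl
      exact h a b ha.1 hb.1 hc.2
    · intro h a b ha hb hab
      exact h a ⟨ha, by omega⟩ b ⟨hb, by omega⟩ (a + b) ⟨by omega, hab⟩ rfl
  rw [StrongGS, colors_eq_iff, hschur, rainbowFree_iff, and_assoc]

lemma weakGS_iff : WeakGS m C χ ↔ colors m χ = C ∧ WeakSchurFree m χ ∧ RainbowFree m χ := by
  have hschur : WeakSchurFree m χ ↔ ∀ a ∈ Icc 1 m, ∀ b ∈ Icc 1 m, ∀ c ∈ Icc 1 m,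
      a + b = c → a ≠ b → a ≠ c → b ≠ c → ¬(χ a = χ b ∧ χ b = χ c) := by
    simp only [mem_Icc]
    constructor
    · rintro h a ha b hb c hc rfl hne - -
      exact h a b ha.1 hb.1 hne hc.2
    · intro h a b ha hb hne hab
      exact h a ⟨ha, by omega⟩ b ⟨hb, by omega⟩ (a + b) ⟨by omega, hab⟩ rfl hne (by omega)
        (by omega)
  rw [WeakGS, colors_eq_iff, hschur, rainbowFree_iff, and_assoc]

lemma IsPattern.strongGS_blowup (hβ : IsPattern d s β) (hd : 0 < d)
    (h : StrongGS m (Icc 1 r) χ) :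
    StrongGS (d * m + (d - 1)) (Icc 1 (r + s)) (blowup d r β χ) := by
  obtain ⟨hχ, hs, hr⟩ := strongGS_iff.1 h
  exact strongGS_iff.2
    ⟨hβ.colors_blowup hd hχ, hβ.schurFree_blowup hd hχ hs, hβ.rainbowFree_blowup hd hr⟩

lemma IsPattern.weakGS_blowup (hβ : IsPattern d s β) (hd : 0 < d)
    (h : WeakGS m (Icc 1 r) χ) :
    WeakGS (d * m + (d - 1)) (Icc 1 (r + s)) (blowup d r β χ) := by
  obtain ⟨hχ, hs, hr⟩ := weakGS_iff.1 h
  exact weakGS_iff.2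
    ⟨hβ.colors_blowup hd hχ, hβ.weakSchurFree_blowup hd hχ hs, hβ.rainbowFree_blowup hd hr⟩

lemma exists_strongGS (r : ℕ) : ∃ m χ, m + 1 = strongBound r ∧ StrongGS m (Icc 1 r) χ := by
  have hzero : StrongGS 0 (Icc 1 0) fun _ ↦ 0 := by simp [StrongGS]
  induction r using strongBound.induct with
  | case1 => exact ⟨0, _, rfl, hzero⟩
  | case2 => exact ⟨1, _, rfl, isPattern_two.strongGS_blowup two_pos hzero⟩
  | case3 r ih =>
    obtain ⟨m, χ, hm, h⟩ := ih
    exact ⟨_, _, by rw [strongBound]; omega, isPattern_five.strongGS_blowup (by omega) h⟩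

lemma weakGS_two_one : WeakGS 2 (Icc 1 1) fun _ ↦ 1 := by
  refine ⟨by decide, by decide, fun a ha b hb c hc hab ↦ ?_, by decide⟩
  simp only [mem_Icc] at ha hb hc
  omega

lemma weakGS_eight_two :
    WeakGS 8 (Icc 1 2) fun x ↦ if x = 1 ∨ x = 2 ∨ x = 4 ∨ x = 8 then 1 else 2 := by
  refine ⟨by decide, by decide, fun a ha b hb c hc hab ↦ ?_, by decide⟩
  simp only [mem_Icc] at ha hb hc ⊢
  split_ifs <;> omega

lemma exists_weakGS : ∀ r, ∃ m χ, m + 1 = weakBound r ∧ WeakGS m (Icc 1 r) χ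
  | 0 => ⟨0, fun _ ↦ 0, rfl, by simp [WeakGS]⟩
  | 1 => ⟨2, _, rfl, weakGS_two_one⟩
  | r + 2 => by
    induction r using strongBound.induct with
    | case1 => exact ⟨8, _, rfl, weakGS_eight_two⟩
    | case2 => exact ⟨17, _, rfl, isPattern_two.weakGS_blowup two_pos weakGS_eight_two⟩
    | case3 r ih =>
      obtain ⟨m, χ, hm, h⟩ := ih
      refine ⟨_, _, ?_, isPattern_five.weakGS_blowup (by omega) h⟩
      simp only [weakBound, strongBound] at hm ⊢
      omega

lemma sInf_forall_ge_not_eq {p : ℕ → Prop} (hm : p m) (hmax : ∀ n, p n → n ≤ m) :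
    sInf {n | ∀ k, n ≤ k → ¬ p k} = m + 1 := by
  refine IsLeast.csInf_eq ⟨fun k hk hpk ↦ ?_, fun n hn ↦ ?_⟩
  · exact (hmax k hpk).not_gt hk
  · by_contra! hlt
    exact hn m (by omega) hm

theorem GS_eq_strongBound (r : ℕ) : GS r = strongBound r := by
  obtain ⟨m, χ, hm, h⟩ := exists_strongGS r
  have hmax (n : ℕ) : (∃ χ, StrongGS n (Icc 1 r) χ) → n ≤ m := by
    rintro ⟨ψ, hψ⟩
    obtain ⟨hcolors, hs, hr⟩ := strongGS_iff.1 hψ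
    have hle := hs.succ_le_strongBound hr
    rw [hcolors, Nat.card_Icc, Nat.add_sub_cancel, ← hm] at hle
    omega
  rw [← hm, ← sInf_forall_ge_not_eq ⟨χ, h⟩ hmax]
  simp only [GS, not_exists]

theorem WGS_eq_weakBound (r : ℕ) : WGS r = weakBound r := by
  obtain ⟨m, χ, hm, h⟩ := exists_weakGS r
  have hmax (n : ℕ) : (∃ χ, WeakGS n (Icc 1 r) χ) → n ≤ m := by
    rintro ⟨ψ, hψ⟩
    obtain ⟨hcolors, hs, hr⟩ := weakGS_iff.1 hψ
    have hle := hs.succ_le_weakBound hr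
    rw [hcolors, Nat.card_Icc, Nat.add_sub_cancel, ← hm] at hle
    omega
  rw [← hm, ← sInf_forall_ge_not_eq ⟨χ, h⟩ hmax]
  simp only [WGS, not_exists]

end GallaiSchurNumbers

end GallaiSchur

/-- For every integer `r > 1`, `5 · WGS r = 9 · GS r`, where `GS` and `WGS` are
the strong and weak Gallai–Schur numbers. -/
theorem five_WGS_eq_nine_GS (r : ℕ) (hr : 1 < r) :
    5 * WGS r = 9 * GS r := by
  obtain ⟨n, rfl⟩ := Nat.exists_eq_add_of_le' hr
  rw [GallaiSchur.WGS_eq_weakBound, GallaiSchur.GS_eq_strongBound]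
  simp only [GallaiSchur.weakBound, GallaiSchur.strongBound]
  ring
end
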